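/- Let d ≥ 1 and 0 < λ ≤ Λ, let F : Sym(d) → ℝ be uniformly (λ,Λ)-elliptic, and assume ᾱ ∈ (0,1) is such that for every β ∈ (0, ᾱ) there is C_β > 0 with the property that every viscosity solution w of F(D²w) = g(x) in B₁, with g continuous and bounded, satisfies ‖w‖_{C^{1,β}(B_{1/2})} ≤ C_β(‖w‖_{L∞(B₁)} + ‖g‖_{L∞(B₁)}). Let θ : cl(B₁) → ℝ be continuous with −1 < inf_{B₁} θ and θ(x) ≤ 0 for all x ∈ B₁, let f : B₁ → ℝ be continuous and bounded, and let u ∈ C(B₁) be a viscosity solution of |Du|^{θ(x)} F(D²u) = f(x) in B₁. Then for every β with 0 < β < ᾱ, u is locally of class C^{1,β} in B₁, i.e. for every compact K ⊂ B₁ the gradient Du exists and is β-Hölder continuous on K. -/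

import Mathlib

/-!
A solution `u` of `|Du|^θ F(D²u) = f` with `-1 ≤ θ ≤ 0` and `|f| ≤ K` satisfies
`|F(D²u)| ≤ K |Du|^(-θ) ≤ K (1 + |Du|)` in the viscosity sense. Test functions with vanishing
gradient are not covered by the equation; at such a point either the Hessian has the sign that makes
the inequality trivial, or the test function can be tilted along an eigenvector so as to touch `u`
nearby with a nonzero gradient.

The two inequalities do not exhibit `F(D²u)` as a continuous function of `x`, so the assumed
estimate does not apply to `u` itself. Instead `u` is approximated uniformly on each smaller ball by
bounded, globally Lipschitz solutions of `F(D²w) = (1 + |Dw|) h` on the whole space, where `h` is a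
truncation of `(w - z) / ε` with `z` close to `u`, bounded independently of `ε`. They come from
Perron's method, between barriers made of sup-convolutions of `±u` with steep cones and of a cutoff
penalty. Translation invariance of `F` makes the Perron solution Lipschitz, so no comparison
principle is needed.

A Lipschitz `w` with `F(D²w)` bounded is `C¹`, being the uniform limit of solutions of
`F(D²v) = (v - w) / ε`. Hence `(1 + |Dw|) h` is continuous and the assumed estimate does apply to
`w`. On small balls, scaling makes the factor in front of the gradient term small, which gives
`C^{1,β}` bounds depending only on the bounds for `w` and `h`; such bounds pass to the limit.

Viscosity inequalities are expressed through second-order jets, and most statements about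
supersolutions follow from the one about subsolutions by the duality `A ↦ -F (-A)`.
-/

open Metric Set Filter
open scoped RealInnerProductSpace

noncomputable section

abbrev Euc (d : ℕ) := EuclideanSpace ℝ (Fin d)
abbrev Mat (d : ℕ) := Matrix (Fin d) (Fin d) ℝ

noncomputable def matOpNorm {n : Type*} [Fintype n] [DecidableEq n]
    (M : Matrix n n ℝ) : ℝ := ‖Matrix.toEuclideanCLM (𝕜 := ℝ) M‖

def UniformlyElliptic {d : ℕ} (lam Lam : ℝ) (F : Mat d → ℝ) : Prop :=
  F 0 = 0 ∧ ∀ M N : Mat d, M.IsHermitian → N.PosSemidef →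
    lam * matOpNorm N ≤ F (M + N) - F M ∧ F (M + N) - F M ≤ Lam * matOpNorm N

noncomputable def hessM {d : ℕ} (φ : Euc d → ℝ) (x : Euc d) : Mat d :=
  Matrix.of fun i j =>
    iteratedFDeriv ℝ 2 φ x ![EuclideanSpace.single i 1, EuclideanSpace.single j 1]

def ViscSubSol {d : ℕ} (F : Mat d → ℝ) (θ f : Euc d → ℝ) (q : Euc d) (u : Euc d → ℝ) : Prop :=
  ∀ x₀ ∈ ball (0 : Euc d) 1, ∀ φ : Euc d → ℝ, ContDiffAt ℝ 2 φ x₀ →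
    IsLocalMax (fun x => u x - φ x) x₀ → q + gradient φ x₀ ≠ 0 →
      f x₀ ≤ ‖q + gradient φ x₀‖ ^ (θ x₀) * F (hessM φ x₀)

def ViscSuperSol {d : ℕ} (F : Mat d → ℝ) (θ f : Euc d → ℝ) (q : Euc d) (u : Euc d → ℝ) : Prop :=
  ∀ x₀ ∈ ball (0 : Euc d) 1, ∀ φ : Euc d → ℝ, ContDiffAt ℝ 2 φ x₀ →
    IsLocalMin (fun x => u x - φ x) x₀ → q + gradient φ x₀ ≠ 0 →
      ‖q + gradient φ x₀‖ ^ (θ x₀) * F (hessM φ x₀) ≤ f x₀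

def ViscSol {d : ℕ} (F : Mat d → ℝ) (θ f : Euc d → ℝ) (q : Euc d) (u : Euc d → ℝ) : Prop :=
  ViscSubSol F θ f q u ∧ ViscSuperSol F θ f q u

def ViscSubSolPure {d : ℕ} (F : Mat d → ℝ) (g : Euc d → ℝ) (u : Euc d → ℝ)
    (s : Set (Euc d)) : Prop :=
  ∀ x₀ ∈ s, ∀ φ : Euc d → ℝ, ContDiffAt ℝ 2 φ x₀ →
    IsLocalMax (fun x => u x - φ x) x₀ → g x₀ ≤ F (hessM φ x₀)

def ViscSuperSolPure {d : ℕ} (F : Mat d → ℝ) (g : Euc d → ℝ) (u : Euc d → ℝ)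
    (s : Set (Euc d)) : Prop :=
  ∀ x₀ ∈ s, ∀ φ : Euc d → ℝ, ContDiffAt ℝ 2 φ x₀ →
    IsLocalMin (fun x => u x - φ x) x₀ → F (hessM φ x₀) ≤ g x₀

def ViscSolPure {d : ℕ} (F : Mat d → ℝ) (g : Euc d → ℝ) (u : Euc d → ℝ)
    (s : Set (Euc d)) : Prop :=
  ViscSubSolPure F g u s ∧ ViscSuperSolPure F g u s

open scoped Topology NNReal

variable {E : Type*} [NormedAddCommGroup E] [InnerProductSpace ℝ E]

/-! ### Symmetric operators and elliptic nonlinearities -/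

section Operators

variable [CompleteSpace E]

variable (E) in
/-- Bounded self-adjoint operators, ordered by positivity of the difference (Loewner order). They
play the role of the symmetric matrices. -/
abbrev SymOp : Type _ := selfAdjoint (E →L[ℝ] E)

instance : CoeFun (SymOp E) fun _ => E → E := ⟨fun A => (A : E →L[ℝ] E)⟩

lemma SymOp.inner_comm (A : SymOp E) (v w : E) : ⟪A v, w⟫ = ⟪A w, v⟫ := by
  rw [real_inner_comm]
  exact (A.2.isSymmetric w v).symm

lemma SymOp.le_iff_inner_le {A B : SymOp E} : A ≤ B ↔ ∀ v, ⟪A v, v⟫ ≤ ⟪B v, v⟫ := by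
  have hsymm : ((B - A : SymOp E) : E →L[ℝ] E).IsSymmetric := (B - A).2.isSymmetric
  rw [← Subtype.coe_le_coe, ContinuousLinearMap.le_def, ContinuousLinearMap.isPositive_def,
    ← AddSubgroup.coe_sub, and_iff_right hsymm]
  simp [inner_sub_left, ContinuousLinearMap.reApplyInnerSelf_apply]

lemma SymOp.nonneg_iff_inner_nonneg {A : SymOp E} : 0 ≤ A ↔ ∀ v, 0 ≤ ⟪A v, v⟫ := by
  simp [SymOp.le_iff_inner_le]

lemma SymOp.sub_nonneg_iff {A B : SymOp E} : 0 ≤ B - A ↔ A ≤ B := by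
  rw [nonneg_iff_inner_nonneg, le_iff_inner_le]
  simp [inner_sub_left]

lemma SymOp.neg_le_neg_iff {A B : SymOp E} : -A ≤ -B ↔ B ≤ A := by
  rw [le_iff_inner_le, le_iff_inner_le]
  simp

/-- The operator `A ↦ -F (-A)`, whose subsolutions are the negatives of the supersolutions of
`F`. -/
def dualOp {M : Type*} [Neg M] (F : M → ℝ) (A : M) : ℝ := -F (-A)

lemma dualOp_dualOp {M : Type*} [InvolutiveNeg M] (F : M → ℝ) : dualOp (dualOp F) = F := by
  ext A
  simp [dualOp]

/-- Degenerate ellipticity together with a Lipschitz bound along the multiples of the identity. -/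
structure IsElliptic (Lam : ℝ≥0) (F : SymOp E → ℝ) : Prop where
  monotone : Monotone F
  add_smul_one_le : ∀ A (c : ℝ), 0 ≤ c → F (A + c • 1) ≤ F A + Lam * c

namespace IsElliptic

variable {Lam : ℝ≥0} {F : SymOp E → ℝ}

lemma dual (hF : IsElliptic Lam F) : IsElliptic Lam (dualOp F) where
  monotone _ _ h := neg_le_neg (hF.monotone (SymOp.neg_le_neg_iff.2 h))
  add_smul_one_le A c hc := by
    have h := hF.add_smul_one_le (-A - c • 1) c hc
    rw [sub_add_cancel] at h
    simp only [dualOp, neg_add']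
    linarith

lemma abs_add_smul_one_sub_le (hF : IsElliptic Lam F) (A : SymOp E) (c : ℝ) :
    |F (A + c • 1) - F A| ≤ Lam * |c| := by
  have hpos (A : SymOp E) {c : ℝ} (hc : 0 ≤ c) : |F (A + c • 1) - F A| ≤ Lam * c := by
    have hmono : F A ≤ F (A + c • 1) := hF.monotone <| SymOp.le_iff_inner_le.2 fun v => by
      simp [inner_add_left, inner_smul_left, mul_nonneg hc]
    rw [abs_of_nonneg (sub_nonneg.2 hmono)]
    linarith [hF.add_smul_one_le A c hc]
  rcases le_total 0 c with hc | hc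
  · simpa [abs_of_nonneg hc] using hpos A hc
  · have h := hpos (A + c • 1) (neg_nonneg.2 hc)
    rwa [add_assoc, ← add_smul, add_neg_cancel, zero_smul, add_zero, abs_sub_comm,
      ← abs_of_nonpos hc] at h

lemma tendsto_add_smul_one (hF : IsElliptic Lam F) (A : SymOp E) :
    Tendsto (fun c : ℝ => F (A + c • 1)) (𝓝 0) (𝓝 (F A)) := by
  refine tendsto_iff_norm_sub_tendsto_zero.2 <| squeeze_zero (fun _ => norm_nonneg _)
    (hF.abs_add_smul_one_sub_le A) ?_
  exact Continuous.tendsto' (by fun_prop) _ _ (by simp)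

lemma exists_pos_lt_add_neg_smul_one (hF : IsElliptic Lam F) {A : SymOp E} {a : ℝ}
    (ha : a < F A) : ∃ c : ℝ, 0 < c ∧ a < F (A + (-c) • 1) := by
  have hneg : Tendsto (fun c : ℝ => -c) (𝓝[>] 0) (𝓝 0) :=
    tendsto_nhdsWithin_of_tendsto_nhds <| Continuous.tendsto' continuous_neg _ _ neg_zero
  obtain ⟨c, hc, hc0⟩ := ((((hF.tendsto_add_smul_one A).comp hneg).eventually_const_lt ha).and
    self_mem_nhdsWithin).exists
  exact ⟨c, hc0, hc⟩

end IsElliptic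

section QuadPoly

/-- The quadratic polynomial with gradient `p` and Hessian `A` at `0`, vanishing there. -/
def quadPoly (p : E) (A : SymOp E) (h : E) : ℝ := ⟪p, h⟫ + 1 / 2 * ⟪A h, h⟫

variable (p q : E) (A B : SymOp E) (c : ℝ) (h k : E)

@[simp]
lemma quadPoly_zero : quadPoly p A 0 = 0 := by
  simp [quadPoly]

lemma quadPoly_neg : quadPoly (-p) (-A) h = -quadPoly p A h := by
  simp only [quadPoly, inner_neg_left, AddSubgroup.coe_neg, neg_apply]
  ring

lemma quadPoly_add : quadPoly (p + q) (A + B) h = quadPoly p A h + quadPoly q B h := by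
  simp only [quadPoly, inner_add_left, AddSubgroup.coe_add, add_apply]
  ring

lemma quadPoly_sub : quadPoly (p - q) (A - B) h = quadPoly p A h - quadPoly q B h := by
  rw [sub_eq_add_neg, sub_eq_add_neg, quadPoly_add, quadPoly_neg, sub_eq_add_neg]

lemma quadPoly_add_smul_one : quadPoly p (A + c • 1) h = quadPoly p A h + c / 2 * ‖h‖ ^ 2 := by
  simp only [quadPoly, AddSubgroup.coe_add, selfAdjoint.val_smul, selfAdjoint.val_one,
    add_apply, smul_apply, one_apply_eq_self,
    inner_add_left, real_inner_smul_left, real_inner_self_eq_norm_sq]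
  ring

lemma quadPoly_add_right : quadPoly p A (h + k) = quadPoly p A h + quadPoly (p + A h) A k := by
  simp only [quadPoly, map_add, inner_add_left, inner_add_right, A.inner_comm k h]
  ring

lemma quadPoly_smul_right : quadPoly p A (c • h) = quadPoly (c • p) (c ^ 2 • A) h := by
  simp only [quadPoly, map_smul, selfAdjoint.val_smul, smul_apply, real_inner_smul_left,
    real_inner_smul_right]
  ring

lemma hasFDerivAt_quadPoly : HasFDerivAt (quadPoly p A) (innerSL ℝ (p + A h)) h := by
  have hA : HasFDerivAt (A : E →L[ℝ] E) (A : E →L[ℝ] E) h := (A : E →L[ℝ] E).hasFDerivAt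
  refine ((innerSL ℝ p).hasFDerivAt.add
    ((hA.inner ℝ (hasFDerivAt_id h)).const_mul (1 / 2))).congr_fderiv ?_
  ext k
  simp [A.inner_comm k h]
  ring

lemma hasGradientAt_quadPoly_sub (x y : E) :
    HasGradientAt (fun z => quadPoly p A (z - x)) (p + A (y - x)) y := by
  rw [hasGradientAt_iff_hasFDerivAt]
  exact (hasFDerivAt_quadPoly p A (y - x)).comp y ((hasFDerivAt_id y).sub_const x)

lemma contDiff_quadPoly {n : WithTop ℕ∞} : ContDiff ℝ n (quadPoly p A) :=
  (contDiff_const.inner ℝ contDiff_id).add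
    (contDiff_const.mul ((A : E →L[ℝ] E).contDiff.inner ℝ contDiff_id))

lemma continuous_quadPoly : Continuous (quadPoly p A) :=
  (contDiff_quadPoly p A (n := 0)).continuous

variable {p A} in
lemma eq_zero_and_nonneg_of_eventually_quadPoly_nonneg (hp : ∀ᶠ h in 𝓝 0, 0 ≤ quadPoly p A h) :
    p = 0 ∧ 0 ≤ A := by
  have hmin : IsLocalMin (quadPoly p A) 0 := by simpa [IsLocalMin, IsMinFilter] using hp
  have hp0 : p = 0 := by
    simpa [← norm_eq_zero] using
      congrArg norm (hmin.hasFDerivAt_eq_zero (hasFDerivAt_quadPoly p A 0))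
  refine ⟨hp0, SymOp.nonneg_iff_inner_nonneg.2 fun v => ?_⟩
  have hline : Tendsto (fun t : ℝ => t • v) (𝓝[≠] 0) (𝓝 0) :=
    tendsto_nhdsWithin_of_tendsto_nhds <| Continuous.tendsto' (by fun_prop) _ _ (zero_smul ℝ v)
  obtain ⟨t, ht, ht0⟩ := ((hline.eventually hp).and self_mem_nhdsWithin).exists
  have ht2 : 0 < t ^ 2 := by have : t ≠ 0 := ht0; positivity
  rw [quadPoly_smul_right, hp0] at ht
  have hquad : 0 ≤ t ^ 2 * ⟪A v, v⟫ := by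
    simpa [quadPoly, inner_smul_left] using ht
  exact nonneg_of_mul_nonneg_right hquad ht2

end QuadPoly

end Operators

/-! ### Jets and viscosity inequalities -/

section Jets

variable [CompleteSpace E]

/-- `(p, A)` is a second-order superjet of `u` at `x`: the quadratic polynomial with gradient `p`
and Hessian `A` at `x` touches `u` from above there. -/
def IsSuperjet (u : E → ℝ) (x p : E) (A : SymOp E) : Prop :=
  ∀ᶠ y in 𝓝 x, u y ≤ u x + quadPoly p A (y - x)

/-- `(p, A)` is a second-order subjet of `u` at `x`: the quadratic polynomial with gradient `p`
and Hessian `A` at `x` touches `u` from below there. -/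
def IsSubjet (u : E → ℝ) (x p : E) (A : SymOp E) : Prop :=
  ∀ᶠ y in 𝓝 x, u x + quadPoly p A (y - x) ≤ u y

/-- The viscosity inequality `Q(x, u, Du) ≤ F(D²u)` at the point `x`, tested with superjets. -/
def JetSubsolutionAt (F : SymOp E → ℝ) (Q : E → ℝ → E → ℝ) (u : E → ℝ) (x : E) : Prop :=
  ∀ p A, IsSuperjet u x p A → Q x (u x) p ≤ F A

/-- The viscosity inequality `F(D²u) ≤ Q(x, u, Du)` at the point `x`, tested with subjets. -/
def JetSupersolutionAt (F : SymOp E → ℝ) (Q : E → ℝ → E → ℝ) (u : E → ℝ) (x : E) : Prop :=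
  ∀ p A, IsSubjet u x p A → F A ≤ Q x (u x) p

/-- The viscosity equation `F(D²u) = Q(x, u, Du)` at the point `x`, tested with jets. -/
def JetSolutionAt (F : SymOp E → ℝ) (Q : E → ℝ → E → ℝ) (u : E → ℝ) (x : E) : Prop :=
  JetSubsolutionAt F Q u x ∧ JetSupersolutionAt F Q u x

variable {F : SymOp E → ℝ} {Q : E → ℝ → E → ℝ} {u v : E → ℝ} {x x₀ p q : E} {A B : SymOp E}

lemma isSuperjet_iff_isLocalMax_sub :
    IsSuperjet u x p A ↔ IsLocalMax (fun y => u y - quadPoly p A (y - x)) x := by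
  simp [IsSuperjet, IsLocalMax, IsMaxFilter]

lemma isSubjet_iff_isLocalMin_sub :
    IsSubjet u x p A ↔ IsLocalMin (fun y => u y - quadPoly p A (y - x)) x := by
  simp [IsSubjet, IsLocalMin, IsMinFilter, le_sub_iff_add_le]

lemma isSubjet_iff_neg : IsSubjet u x p A ↔ IsSuperjet (-u) x (-p) (-A) := by
  simp only [IsSubjet, IsSuperjet, quadPoly_neg, Pi.neg_apply, ← neg_add, neg_le_neg_iff]

lemma jetSupersolutionAt_iff_dual :
    JetSupersolutionAt F Q u x ↔
      JetSubsolutionAt (dualOp F) (fun y r p => -Q y (-r) (-p)) (-u) x := by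
  constructor
  · intro h p A hp
    have := h (-p) (-A) (isSubjet_iff_neg.2 (by rwa [neg_neg, neg_neg]))
    simpa [dualOp] using this
  · intro h p A hp
    have := h (-p) (-A) (isSubjet_iff_neg.1 hp)
    simpa [dualOp] using this

lemma IsSuperjet.mono (h : IsSuperjet v x p A) (hle : ∀ᶠ y in 𝓝 x, u y ≤ v y)
    (heq : u x = v x) : IsSuperjet u x p A := by
  filter_upwards [h, hle] with y hy hy'
  rw [heq]
  exact hy'.trans hy

lemma IsSubjet.mono (h : IsSubjet v x p A) (hle : ∀ᶠ y in 𝓝 x, v y ≤ u y)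
    (heq : u x = v x) : IsSubjet u x p A := by
  filter_upwards [h, hle] with y hy hy'
  rw [heq]
  exact hy.trans hy'

lemma IsSuperjet.add (hu : IsSuperjet u x p A) (hv : IsSuperjet v x q B) :
    IsSuperjet (u + v) x (p + q) (A + B) := by
  filter_upwards [hu, hv] with y hy hy'
  rw [quadPoly_add, Pi.add_apply, Pi.add_apply]
  linarith

lemma isSubjet_add_quadPoly (c : ℝ) (x₀ x p : E) (A : SymOp E) :
    IsSubjet (fun y => c + quadPoly p A (y - x₀)) x (p + A (x - x₀)) A :=
  Eventually.of_forall fun y => by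
    have h := quadPoly_add_right p A (x - x₀) (y - x)
    rw [sub_add_sub_cancel'] at h
    simp only [h, add_assoc, le_refl]

lemma IsSuperjet.of_isLocalMax (h : IsLocalMax (fun y => u y - quadPoly p A (y - x₀)) x) :
    IsSuperjet u x (p + A (x - x₀)) A := by
  filter_upwards [h] with y hy
  have h := quadPoly_add_right p A (x - x₀) (y - x)
  rw [sub_add_sub_cancel'] at h
  linarith

lemma IsSubjet.eq_and_le (hsub : IsSubjet u x p A) (hsuper : IsSuperjet u x q B) :
    q = p ∧ A ≤ B := by
  have hdiff : ∀ᶠ y in 𝓝 x, 0 ≤ quadPoly (q - p) (B - A) (y - x) := by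
    filter_upwards [hsub, hsuper] with y hy hy'
    rw [quadPoly_sub]
    linarith
  have hshift : Tendsto (x + ·) (𝓝 0) (𝓝 x) := Continuous.tendsto' (by fun_prop) _ _ (add_zero x)
  obtain ⟨hqp, hAB⟩ := eq_zero_and_nonneg_of_eventually_quadPoly_nonneg <|
    (hshift.eventually hdiff).mono fun h hh => by rwa [add_sub_cancel_left] at hh
  exact ⟨sub_eq_zero.1 hqp, SymOp.sub_nonneg_iff.1 hAB⟩

lemma IsSubjet.jetSubsolutionAt (hF : Monotone F) (h : IsSubjet u x p A)
    (hle : Q x (u x) p ≤ F A) : JetSubsolutionAt F Q u x := by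
  intro q B hq
  obtain ⟨rfl, hAB⟩ := h.eq_and_le hq
  exact hle.trans (hF hAB)

/-- The rescaling is the one that leaves second derivatives unchanged. -/
lemma IsSuperjet.of_rescale {ρ b : ℝ} {c : E} (hρ : ρ ≠ 0)
    (h : IsSuperjet (fun y => (u (c + ρ • y) - b) / ρ ^ 2) x p A) :
    IsSuperjet u (c + ρ • x) (ρ • p) A := by
  have hunscale : Tendsto (fun y => ρ⁻¹ • (y - c)) (𝓝 (c + ρ • x)) (𝓝 x) :=
    Continuous.tendsto' (by fun_prop) _ _ (by rw [add_sub_cancel_left, inv_smul_smul₀ hρ])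
  have hρ2 : 0 < ρ ^ 2 := by positivity
  filter_upwards [hunscale.eventually h] with y hy
  have hquad : quadPoly p A (ρ⁻¹ • (y - c) - x) = quadPoly (ρ • p) A (y - (c + ρ • x)) / ρ ^ 2 := by
    rw [show ρ⁻¹ • (y - c) - x = ρ⁻¹ • (y - (c + ρ • x)) by
      simp only [smul_sub, smul_add, inv_smul_smul₀ hρ]; abel]
    simp only [quadPoly, map_smul, inner_smul_left, inner_smul_right, conj_trivial]
    field_simp
  rw [smul_inv_smul₀ hρ, add_sub_cancel, hquad, ← add_div, div_le_div_iff_of_pos_right hρ2]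
    at hy
  linarith

lemma IsSubjet.of_rescale {ρ b : ℝ} {c : E} (hρ : ρ ≠ 0)
    (h : IsSubjet (fun y => (u (c + ρ • y) - b) / ρ ^ 2) x p A) :
    IsSubjet u (c + ρ • x) (ρ • p) A := by
  rw [isSubjet_iff_neg] at h ⊢
  rw [← smul_neg]
  refine IsSuperjet.of_rescale (b := -b) hρ (Eq.mp ?_ h)
  congr 1
  ext y
  simp only [Pi.neg_apply]
  ring

lemma JetSubsolutionAt.congr (h : JetSubsolutionAt F Q u x) (huv : u =ᶠ[𝓝 x] v) :
    JetSubsolutionAt F Q v x := fun p A hp =>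
  huv.eq_of_nhds ▸ h p A (hp.mono huv.le huv.eq_of_nhds)

lemma JetSubsolutionAt.sup_of_le (hu : JetSubsolutionAt F Q u x) (hle : v x ≤ u x) :
    JetSubsolutionAt F Q (u ⊔ v) x := by
  intro p A hp
  have heq : (u ⊔ v) x = u x := max_eq_left hle
  rw [heq]
  exact hu p A (hp.mono (Eventually.of_forall fun _ => le_sup_left) heq.symm)

lemma JetSubsolutionAt.sup (hu : JetSubsolutionAt F Q u x) (hv : JetSubsolutionAt F Q v x) :
    JetSubsolutionAt F Q (u ⊔ v) x := by
  rcases le_total (v x) (u x) with h | h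
  · exact hu.sup_of_le h
  · exact sup_comm u v ▸ hv.sup_of_le h

section Gradient

variable {G : E}

lemma IsSuperjet.eq_gradient (h : IsSuperjet u x p A) (hG : HasGradientAt u G x) : p = G := by
  have hzero := (isSuperjet_iff_isLocalMax_sub.1 h).hasFDerivAt_eq_zero
    (hG.hasFDerivAt.sub (hasGradientAt_quadPoly_sub p A x x).hasFDerivAt)
  refine (ext_inner_right ℝ fun v => ?_).symm
  simpa [sub_eq_zero] using DFunLike.congr_fun hzero v

lemma IsSubjet.eq_gradient (h : IsSubjet u x p A) (hG : HasGradientAt u G x) : p = G := by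
  have hneg : HasGradientAt (-u) (-G) x := by
    rw [hasGradientAt_iff_hasFDerivAt, map_neg]
    exact hG.hasFDerivAt.neg
  exact neg_injective ((isSubjet_iff_neg.1 h).eq_gradient hneg)

lemma IsSuperjet.norm_le {L : ℝ≥0} (hu : LipschitzWith L u) (h : IsSuperjet u x p A) :
    ‖p‖ ≤ L := by
  have hray : Tendsto (fun t : ℝ => x - t • p) (𝓝[>] 0) (𝓝 x) :=
    tendsto_nhdsWithin_of_tendsto_nhds <| Continuous.tendsto' (by fun_prop) _ _ (by simp)
  have hlim : Tendsto (fun t : ℝ => L * ‖p‖ + t * (1 / 2 * ⟪A p, p⟫)) (𝓝[>] 0) (𝓝 (L * ‖p‖)) :=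
    tendsto_nhdsWithin_of_tendsto_nhds <| Continuous.tendsto' (by fun_prop) _ _ (by simp)
  have hsq : ‖p‖ ^ 2 ≤ L * ‖p‖ := by
    refine ge_of_tendsto hlim ?_
    filter_upwards [hray.eventually h, self_mem_nhdsWithin] with t ht (ht0 : 0 < t)
    have hlip : u x - u (x - t • p) ≤ L * (t * ‖p‖) := by
      simpa [norm_smul, abs_of_pos ht0] using (le_abs_self _).trans (hu.dist_le_mul x (x - t • p))
    have hquad : quadPoly p A (x - t • p - x) = -(t * ‖p‖ ^ 2) + t ^ 2 * (1 / 2 * ⟪A p, p⟫) := by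
      rw [sub_sub_cancel_left, ← neg_smul, quadPoly_smul_right]
      simp only [quadPoly, selfAdjoint.val_smul, smul_apply, real_inner_smul_left,
        real_inner_self_eq_norm_sq]
      ring
    refine le_of_mul_le_mul_left ?_ ht0
    linarith
  rcases (norm_nonneg p).eq_or_lt with hp | hp
  · exact hp ▸ L.coe_nonneg
  · exact le_of_mul_le_mul_right (by rwa [← sq]) hp

lemma IsSubjet.norm_le {L : ℝ≥0} (hu : LipschitzWith L u) (h : IsSubjet u x p A) :
    ‖p‖ ≤ L := by
  simpa using (isSubjet_iff_neg.1 h).norm_le hu.neg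

end Gradient

end Jets

/-! ### Perron's method -/

section Gluing

open Classical in
/-- The gluing of `w` with a competitor `P` that is only relevant in the open set `Ω`. -/
def glueMax {X : Type*} (Ω : Set X) (w P : X → ℝ) : X → ℝ := Ω.piecewise (w ⊔ P) w

variable {X : Type*} {Ω K : Set X} {w P : X → ℝ} {x : X}

lemma le_glueMax (x : X) : w x ≤ glueMax Ω w P x := by
  by_cases hx : x ∈ Ω <;> simp [glueMax, hx]

variable [TopologicalSpace X]

lemma glueMax_eventuallyEq_sup (hΩ : IsOpen Ω) (hx : x ∈ Ω) :
    glueMax Ω w P =ᶠ[𝓝 x] w ⊔ P := by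
  filter_upwards [hΩ.mem_nhds hx] with y hy using by simp [glueMax, hy]

lemma glueMax_eventuallyEq_left (hK : IsClosed K) (hP : ∀ y ∈ Ω \ K, P y ≤ w y) (hx : x ∉ K) :
    glueMax Ω w P =ᶠ[𝓝 x] w := by
  filter_upwards [hK.isOpen_compl.mem_nhds hx] with y hy
  by_cases hyΩ : y ∈ Ω
  · simpa [glueMax, hyΩ] using hP y ⟨hyΩ, hy⟩
  · simp [glueMax, hyΩ]

lemma continuous_glueMax (hΩ : IsOpen Ω) (hK : IsClosed K) (hKΩ : K ⊆ Ω) (hw : Continuous w)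
    (hPc : Continuous P) (hP : ∀ y ∈ Ω \ K, P y ≤ w y) : Continuous (glueMax Ω w P) := by
  refine continuous_iff_continuousAt.2 fun x => ?_
  by_cases hx : x ∈ K
  · exact (hw.sup hPc).continuousAt.congr (glueMax_eventuallyEq_sup hΩ (hKΩ hx)).symm
  · exact hw.continuousAt.congr (glueMax_eventuallyEq_left hK hP hx).symm

end Gluing

section PerronClass

variable [CompleteSpace E] {Lam L : ℝ≥0} {F : SymOp E → ℝ} {Q : E → ℝ → E → ℝ}
  {w U V : E → ℝ} {x x₀ p : E} {A : SymOp E}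

lemma JetSubsolutionAt.glueMax {Ω K : Set E} {P : E → ℝ} (hΩ : IsOpen Ω) (hK : IsClosed K)
    (hKΩ : K ⊆ Ω) (hw : JetSubsolutionAt F Q w x) (hPs : ∀ y ∈ Ω, JetSubsolutionAt F Q P y)
    (hP : ∀ y ∈ Ω \ K, P y ≤ w y) : JetSubsolutionAt F Q (glueMax Ω w P) x := by
  by_cases hx : x ∈ K
  · exact (hw.sup (hPs x (hKΩ hx))).congr (glueMax_eventuallyEq_sup hΩ (hKΩ hx)).symm
  · exact hw.congr (glueMax_eventuallyEq_left hK hP hx).symm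

/-- A strict subjet of a subsolution can be pushed up: the competitor is the touching polynomial
with its Hessian lowered by `c • 1`, raised by `δ`. -/
lemma exists_quadPoly_competitor (hF : IsElliptic Lam F)
    (hQc : Continuous fun t : E × ℝ × E => Q t.1 t.2.1 t.2.2) (hV : ContinuousAt V x₀)
    (hwV : w x₀ < V x₀) (hj : IsSubjet w x₀ p A) (hlt : Q x₀ (w x₀) p < F A) :
    ∃ P : E → ℝ, Continuous P ∧ w x₀ < P x₀ ∧ ∃ r > 0,
      (∀ y ∈ ball x₀ r, P y ≤ V y ∧ JetSubsolutionAt F Q P y) ∧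
      ∀ y ∈ ball x₀ r \ closedBall x₀ (r / 2), P y ≤ w y := by
  obtain ⟨c, hc, hFc⟩ := hF.exists_pos_lt_add_neg_smul_one hlt
  set B : SymOp E := A + (-c) • 1 with hB
  have hquad (h : E) : quadPoly p B h = quadPoly p A h - c / 2 * ‖h‖ ^ 2 := by
    rw [hB, quadPoly_add_smul_one]
    ring
  have hcont : Continuous fun t : ℝ × E => w x₀ + t.1 + quadPoly p B (t.2 - x₀) := by
    have := continuous_quadPoly p B
    fun_prop
  have hbelow : ∀ᶠ t : ℝ × E in 𝓝 (0, x₀), w x₀ + t.1 + quadPoly p B (t.2 - x₀) < V t.2 :=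
    hcont.continuousAt.eventually_lt (hV.comp_of_eq continuousAt_snd rfl) (by simpa using hwV)
  have hstrict : ∀ᶠ t : ℝ × E in 𝓝 (0, x₀),
      Q t.2 (w x₀ + t.1 + quadPoly p B (t.2 - x₀)) (p + B (t.2 - x₀)) < F B :=
    (hQc.comp (continuous_snd.prodMk (hcont.prodMk
      (by fun_prop : Continuous fun t : ℝ × E => p + B (t.2 - x₀))))).continuousAt.eventually_lt
        continuousAt_const (by simpa using hFc)
  have hnear := hbelow.and hstrict
  rw [nhds_prod_eq] at hnear
  obtain ⟨D, hD, R, hR, hDR⟩ := eventually_prod_iff.1 hnear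
  obtain ⟨r, hr, hball⟩ := nhds_basis_ball.eventually_iff.1 (hR.and hj)
  obtain ⟨δ, ⟨hδD, hδ⟩, hδ0⟩ : ∃ δ : ℝ, (D δ ∧ δ < c / 2 * (r / 2) ^ 2) ∧ 0 < δ :=
    (((hD.and (eventually_lt_nhds (by positivity : 0 < c / 2 * (r / 2) ^ 2))).filter_mono
      nhdsWithin_le_nhds).and self_mem_nhdsWithin).exists (f := 𝓝[>] 0)
  refine ⟨fun y => w x₀ + δ + quadPoly p B (y - x₀), hcont.comp (by fun_prop : Continuous (δ, ·)),
    by simpa using hδ0, r, hr, fun y hy => ?_, fun y hy => ?_⟩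
  · have hy' := hDR hδD (hball hy).1
    exact ⟨hy'.1.le, (isSubjet_add_quadPoly _ x₀ y p B).jetSubsolutionAt hF.monotone hy'.2.le⟩
  · have hfar : (r / 2) ^ 2 ≤ ‖y - x₀‖ ^ 2 := by
      have := hy.2
      rw [mem_closedBall, dist_eq_norm, not_le] at this
      gcongr
    have := (hball hy.1).2
    have := hquad (y - x₀)
    nlinarith

/-- Continuous subsolutions between the barriers `U` and `V`. -/
def perronClass (F : SymOp E → ℝ) (Q : E → ℝ → E → ℝ) (U V : E → ℝ) : Set (E → ℝ) :=
  {v | Continuous v ∧ (∀ x, JetSubsolutionAt F Q v x) ∧ U ≤ v ∧ v ≤ V}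

lemma exists_lt_mem_perronClass (hF : IsElliptic Lam F)
    (hQc : Continuous fun t : E × ℝ × E => Q t.1 t.2.1 t.2.2) (hVc : Continuous V)
    (hV : JetSupersolutionAt F Q V x₀) (hw : w ∈ perronClass F Q U V)
    (hnot : ¬JetSupersolutionAt F Q w x₀) : ∃ v ∈ perronClass F Q U V, w x₀ < v x₀ := by
  obtain ⟨hwc, hws, hUw, hwV⟩ := hw
  simp only [JetSupersolutionAt, not_forall, not_le] at hnot
  obtain ⟨p, A, hj, hlt⟩ := hnot
  have hwV₀ : w x₀ < V x₀ := (hwV x₀).lt_of_ne fun heq => by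
    have := hV p A (hj.mono (Eventually.of_forall hwV) heq.symm)
    rw [← heq] at this
    exact this.not_gt hlt
  obtain ⟨P, hPc, hwP, r, hr, hP, hPw⟩ :=
    exists_quadPoly_competitor hF hQc hVc.continuousAt hwV₀ hj hlt
  have hKΩ : closedBall x₀ (r / 2) ⊆ ball x₀ r := closedBall_subset_ball (by linarith)
  refine ⟨glueMax (ball x₀ r) w P,
    ⟨continuous_glueMax isOpen_ball isClosed_closedBall hKΩ hwc hPc hPw,
      fun x => (hws x).glueMax isOpen_ball isClosed_closedBall hKΩ (fun y hy => (hP y hy).2) hPw,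
      fun y => (hUw y).trans (le_glueMax y), fun y => ?_⟩, ?_⟩
  · by_cases hy : y ∈ ball x₀ r
    · simpa [glueMax, hy] using ⟨hwV y, (hP y hy).1⟩
    · simpa [glueMax, hy] using hwV y
  · simpa [glueMax, hr] using hwP

/-- The upper envelope of the subsolutions between the barriers `U` and `V`. -/
def perronSup (F : SymOp E → ℝ) (Q : E → ℝ → E → ℝ) (U V : E → ℝ) (x : E) : ℝ :=
  sSup ((fun v => v x) '' perronClass F Q U V)

lemma isLUB_perronSup (hU : U ∈ perronClass F Q U V) (x : E) :
    IsLUB ((fun v => v x) '' perronClass F Q U V) (perronSup F Q U V x) :=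
  isLUB_csSup ⟨_, U, hU, rfl⟩ ⟨V x, forall_mem_image.2 fun _ hv => hv.2.2.2 x⟩

/-- Translates of subsolutions, lowered by `L` times the length of the translation, are
subsolutions. Hence the largest subsolution is Lipschitz. -/
lemma lipschitzWith_perronSup (hQ : ∀ x y r s p, r + L * dist x y ≤ s → Q x r p ≤ Q y s p)
    (hV : LipschitzWith L V) (hU : U ∈ perronClass F Q U V) :
    LipschitzWith L (perronSup F Q U V) := by
  refine LipschitzWith.of_le_add_mul L fun x y => (isLUB_perronSup hU x).2 ?_
  rintro _ ⟨v, ⟨hvc, hvs, -, hvV⟩, rfl⟩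
  set a := x - y with ha
  set v' : E → ℝ := fun z => v (a + z) - L * ‖a‖ with hv'
  have hv's (z : E) : JetSubsolutionAt F Q v' z := fun p A hp => by
    have hjet : IsSuperjet v (a + z) p A := by
      simpa using IsSuperjet.of_rescale (u := v) (ρ := 1) (b := L * ‖a‖) (c := a) one_ne_zero
        (by simpa using hp)
    refine (hQ z (a + z) _ _ p ?_).trans (hvs (a + z) p A hjet)
    simp [hv']
  have hv'V : v' ≤ V := fun z => by
    have := hV.le_add_mul (a + z) z
    rw [dist_eq_norm, add_sub_cancel_right] at this
    simp only [hv']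
    linarith [hvV (a + z)]
  have hmem : U ⊔ v' ∈ perronClass F Q U V :=
    ⟨hU.1.sup (by fun_prop), fun z => (hU.2.1 z).sup (hv's z), le_sup_left,
      sup_le hU.2.2.2 hv'V⟩
  have := le_sup_right.trans ((isLUB_perronSup hU y).1 ⟨_, hmem, rfl⟩)
  simp only [hv', ha, sub_add_cancel, ← dist_eq_norm] at this
  linarith

end PerronClass

section Perron

variable [ProperSpace E] {Lam L : ℝ≥0} {F : SymOp E → ℝ} {Q : E → ℝ → E → ℝ}
  {v w U V : E → ℝ} {x₀ p : E} {A : SymOp E}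

lemma exists_isSuperjet_near {m r γ δ : ℝ} (hv : ContinuousOn v (closedBall x₀ r)) (hr : 0 ≤ r)
    (hγ : 0 < γ) (hle : ∀ y ∈ closedBall x₀ r, v y ≤ m + quadPoly p A (y - x₀))
    (hm : m - δ ≤ v x₀) (hδ : δ < γ * r ^ 2) :
    ∃ x₁ ∈ ball x₀ r,
      m - δ + quadPoly p (A + (2 * γ) • 1) (x₁ - x₀) ≤ v x₁ ∧
      IsSuperjet v x₁ (p + (A + (2 * γ) • 1 : SymOp E) (x₁ - x₀)) (A + (2 * γ) • 1) := by
  set B : SymOp E := A + (2 * γ) • 1 with hB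
  have hquad (h : E) : quadPoly p B h = quadPoly p A h + γ * ‖h‖ ^ 2 := by
    rw [hB, quadPoly_add_smul_one]
    ring
  have hcont : ContinuousOn (fun y => v y - quadPoly p B (y - x₀)) (closedBall x₀ r) :=
    hv.sub ((continuous_quadPoly p B).comp (by fun_prop)).continuousOn
  obtain ⟨x₁, hx₁, hmax⟩ := (isCompact_closedBall x₀ r).exists_isMaxOn
    ⟨x₀, mem_closedBall_self hr⟩ hcont
  have hmax₀ : v x₀ ≤ v x₁ - quadPoly p B (x₁ - x₀) := by
    simpa using hmax (mem_closedBall_self hr)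
  have hdist : γ * ‖x₁ - x₀‖ ^ 2 < γ * r ^ 2 := by
    linarith [hle x₁ hx₁, hquad (x₁ - x₀)]
  have hball : x₁ ∈ ball x₀ r := by
    rw [mem_ball, dist_eq_norm]
    exact lt_of_pow_lt_pow_left₀ 2 hr (lt_of_mul_lt_mul_left hdist hγ.le)
  refine ⟨x₁, hball, by linarith, IsSuperjet.of_isLocalMax ?_⟩
  filter_upwards [isOpen_ball.mem_nhds hball] with y hy using hmax (ball_subset_closedBall hy)

lemma JetSubsolutionAt.of_isLUB (hF : IsElliptic Lam F)
    (hQc : Continuous fun t : E × ℝ × E => Q t.1 t.2.1 t.2.2) (hQm : ∀ x p, Monotone (Q x · p))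
    {S : Set (E → ℝ)} {s : Set E} (hs : s ∈ 𝓝 x₀) (hSc : ∀ v ∈ S, ContinuousOn v s)
    (hS : ∀ v ∈ S, ∀ x ∈ s, JetSubsolutionAt F Q v x)
    (hw : ∀ x ∈ s, IsLUB ((fun v => v x) '' S) (w x)) : JetSubsolutionAt F Q w x₀ := by
  intro p A hp
  by_contra! hlt
  obtain ⟨γ, hFγ, hγ⟩ : ∃ γ : ℝ, F (A + (2 * γ) • 1) < Q x₀ (w x₀) p ∧ 0 < γ := by
    have hdouble : Tendsto (fun γ : ℝ => 2 * γ) (𝓝[>] 0) (𝓝 0) :=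
      tendsto_nhdsWithin_of_tendsto_nhds <| Continuous.tendsto' (by fun_prop) _ _ (mul_zero 2)
    exact ((((hF.tendsto_add_smul_one A).comp hdouble).eventually_lt_const hlt).and
      self_mem_nhdsWithin).exists
  set B : SymOp E := A + (2 * γ) • 1
  have hnear : ∀ᶠ t : ℝ × E in 𝓝 (0, x₀),
      F B < Q t.2 (w x₀ - t.1 + quadPoly p B (t.2 - x₀)) (p + B (t.2 - x₀)) := by
    have hquad := continuous_quadPoly p B
    have hcont : Continuous fun t : ℝ × E =>
        Q t.2 (w x₀ - t.1 + quadPoly p B (t.2 - x₀)) (p + B (t.2 - x₀)) :=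
      hQc.comp (g := fun t : E × ℝ × E => Q t.1 t.2.1 t.2.2)
        (f := fun t : ℝ × E => (t.2, w x₀ - t.1 + quadPoly p B (t.2 - x₀), p + B (t.2 - x₀)))
        (by fun_prop)
    exact continuousAt_const.eventually_lt hcont.continuousAt (by simpa using hFγ)
  rw [nhds_prod_eq] at hnear
  obtain ⟨P, hP, R, hR, hPR⟩ := eventually_prod_iff.1 hnear
  obtain ⟨r, hr, hball⟩ := nhds_basis_closedBall.eventually_iff.1 (hR.and (hp.and hs))
  obtain ⟨δ, ⟨hδP, hδ⟩, hδ0⟩ : ∃ δ : ℝ, (P δ ∧ δ < γ * r ^ 2) ∧ 0 < δ :=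
    (((hP.and (eventually_lt_nhds (by positivity : 0 < γ * r ^ 2))).filter_mono
      nhdsWithin_le_nhds).and self_mem_nhdsWithin).exists (f := 𝓝[>] 0)
  obtain ⟨_, ⟨v, hv, rfl⟩, hvδ⟩ := (lt_isLUB_iff (hw x₀ (mem_of_mem_nhds hs))).1
    (sub_lt_self (w x₀) hδ0)
  obtain ⟨x₁, hx₁, hvx₁, hjet⟩ := exists_isSuperjet_near
    ((hSc v hv).mono fun y hy => (hball hy).2.2) hr.le hγ
    (fun y hy => ((hw y (hball hy).2.2).1 ⟨v, hv, rfl⟩).trans (hball hy).2.1) hvδ.le hδ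
  have hx₁' := hball (ball_subset_closedBall hx₁)
  exact (hPR hδP hx₁'.1).not_ge <| (hQm _ _ hvx₁).trans (hS v hv x₁ hx₁'.2.2 _ _ hjet)

theorem exists_lipschitzWith_jetSolution (hF : IsElliptic Lam F)
    (hQc : Continuous fun t : E × ℝ × E => Q t.1 t.2.1 t.2.2)
    (hQ : ∀ x y r s p, r + L * dist x y ≤ s → Q x r p ≤ Q y s p)
    (hUc : Continuous U) (hV : LipschitzWith L V) (hUV : U ≤ V)
    (hUs : ∀ x, JetSubsolutionAt F Q U x) (hVs : ∀ x, JetSupersolutionAt F Q V x) :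
    ∃ w : E → ℝ, LipschitzWith L w ∧ U ≤ w ∧ w ≤ V ∧
      ∀ x, JetSolutionAt F Q w x := by
  have hU : U ∈ perronClass F Q U V := ⟨hUc, hUs, le_rfl, hUV⟩
  have hlub := isLUB_perronSup hU
  have hlip := lipschitzWith_perronSup hQ hV hU
  have hQm (x p : E) : Monotone (Q x · p) := fun r s hrs => hQ x x r s p (by simpa using hrs)
  have hsub (x : E) : JetSubsolutionAt F Q (perronSup F Q U V) x :=
    .of_isLUB hF hQc hQm univ_mem (fun v hv => hv.1.continuousOn) (fun v hv y _ => hv.2.1 y)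
      fun y _ => hlub y
  have hUw : U ≤ perronSup F Q U V := fun x => (hlub x).1 ⟨U, hU, rfl⟩
  have hwV : perronSup F Q U V ≤ V := fun x => (hlub x).2 <|
    forall_mem_image.2 fun _ hv => hv.2.2.2 x
  refine ⟨_, hlip, hUw, hwV, fun x => ⟨hsub x, ?_⟩⟩
  by_contra hnot
  obtain ⟨v, hv, hlt⟩ := exists_lt_mem_perronClass hF hQc hV.continuous (hVs x)
    ⟨hlip.continuous, hsub, hUw, hwV⟩ hnot
  exact hlt.not_ge ((hlub x).1 ⟨v, hv, rfl⟩)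

end Perron

/-! ### `C^{1,β}` bounds -/

section C1Holder

variable [CompleteSpace E]

/-- `w` is differentiable on `s`, with gradient bounded by `M` and `β`-Hölder continuous with
constant `N`. -/
structure HasC1HolderBound (w : E → ℝ) (s : Set E) (β M N : ℝ) : Prop where
  differentiableAt : ∀ x ∈ s, DifferentiableAt ℝ w x
  norm_gradient_le : ∀ x ∈ s, ‖gradient w x‖ ≤ M
  norm_gradient_sub_le : ∀ x ∈ s, ∀ y ∈ s, ‖gradient w x - gradient w y‖ ≤ N * ‖x - y‖ ^ β

lemma tendsto_mul_norm_sub_rpow {V : Type*} [SeminormedAddCommGroup V] {β : ℝ} (hβ : 0 < β)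
    (N : ℝ) (x : V) :
    Tendsto (fun y => N * ‖y - x‖ ^ β) (𝓝 x) (𝓝 0) := by
  have hcont : Continuous fun y : V => N * ‖y - x‖ ^ β :=
    continuous_const.mul ((continuous_id.sub continuous_const).norm.rpow_const fun _ =>
      Or.inr hβ.le)
  exact hcont.tendsto' _ _ (by simp [Real.zero_rpow hβ.ne'])

namespace HasC1HolderBound

variable {w : E → ℝ} {s : Set E} {β M N : ℝ}

lemma of_hasGradientAt {G : E → E} (hG : ∀ x ∈ s, HasGradientAt w (G x) x)
    (hM : ∀ x ∈ s, ‖G x‖ ≤ M) (hN : ∀ x ∈ s, ∀ y ∈ s, ‖G x - G y‖ ≤ N * ‖x - y‖ ^ β) :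
    HasC1HolderBound w s β M N where
  differentiableAt x hx := (hG x hx).differentiableAt
  norm_gradient_le x hx := (hG x hx).gradient ▸ hM x hx
  norm_gradient_sub_le x hx y hy := (hG x hx).gradient ▸ (hG y hy).gradient ▸ hN x hx y hy

lemma hasGradientAt (h : HasC1HolderBound w s β M N) {x : E} (hx : x ∈ s) :
    HasGradientAt w (gradient w x) x :=
  (h.differentiableAt x hx).hasGradientAt

lemma mono {t : Set E} (h : HasC1HolderBound w t β M N) (hst : s ⊆ t) :
    HasC1HolderBound w s β M N where
  differentiableAt x hx := h.differentiableAt x (hst hx)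
  norm_gradient_le x hx := h.norm_gradient_le x (hst hx)
  norm_gradient_sub_le x hx y hy := h.norm_gradient_sub_le x (hst hx) y (hst hy)

lemma continuousAt_gradient (h : HasC1HolderBound w s β M N) (hβ : 0 < β) {x : E}
    (hs : s ∈ 𝓝 x) : ContinuousAt (gradient w) x := by
  refine tendsto_iff_norm_sub_tendsto_zero.2 <|
    squeeze_zero' (.of_forall fun _ => norm_nonneg _) ?_ (tendsto_mul_norm_sub_rpow hβ N x)
  filter_upwards [hs] with y hy using h.norm_gradient_sub_le y hy x (mem_of_mem_nhds hs)

lemma abs_sub_sub_inner_le (h : HasC1HolderBound w s β M N) (hs : Convex ℝ s) (hβ : 0 ≤ β)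
    (hN : 0 ≤ N) {x y : E} (hx : x ∈ s) (hy : y ∈ s) :
    |w y - w x - ⟪gradient w x, y - x⟫| ≤ N * ‖y - x‖ ^ β * ‖y - x‖ := by
  have hconv : Convex ℝ (s ∩ closedBall x ‖y - x‖) := hs.inter (convex_closedBall _ _)
  have hbound : ∀ z ∈ s ∩ closedBall x ‖y - x‖,
      ‖InnerProductSpace.toDual ℝ E (gradient w z) - InnerProductSpace.toDual ℝ E (gradient w x)‖
        ≤ N * ‖y - x‖ ^ β := by
    rintro z ⟨hz, hzx⟩
    rw [← map_sub, LinearIsometryEquiv.norm_map]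
    refine (h.norm_gradient_sub_le z hz x hx).trans ?_
    rw [mem_closedBall, dist_eq_norm] at hzx
    gcongr
  simpa using hconv.norm_image_sub_le_of_norm_hasFDerivWithin_le'
    (fun z hz => (h.hasGradientAt hz.1).hasFDerivAt.hasFDerivWithinAt) hbound
    ⟨hx, mem_closedBall_self (norm_nonneg _)⟩ ⟨hy, by rw [mem_closedBall, dist_eq_norm]⟩

lemma of_rescale {c : E} {ρ r : ℝ} (hρ : 0 < ρ)
    (h : HasC1HolderBound (fun y => w (c + ρ • y) / ρ ^ 2) (ball 0 r) β M N) :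
    HasC1HolderBound w (ball c (ρ * r)) β (ρ * M) (ρ * (N * ρ⁻¹ ^ β)) := by
  set v : E → ℝ := fun y => w (c + ρ • y) / ρ ^ 2
  set unscale : E → E := fun x => ρ⁻¹ • (x - c)
  have hv : w = fun x => ρ ^ 2 * v (unscale x) := by
    ext x
    simp only [v, unscale, smul_inv_smul₀ hρ.ne', add_sub_cancel]
    field_simp
  have hmaps : ∀ x ∈ ball c (ρ * r), unscale x ∈ ball 0 r := fun x hx => by
    rwa [mem_ball_zero_iff, norm_smul, norm_inv, Real.norm_of_nonneg hρ.le, inv_mul_lt_iff₀ hρ,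
      ← dist_eq_norm]
  refine of_hasGradientAt (G := fun x => ρ • gradient v (unscale x)) (fun x hx => ?_)
    (fun x hx => ?_) (fun x hx y hy => ?_)
  · have hunscale : HasFDerivAt unscale (ρ⁻¹ • ContinuousLinearMap.id ℝ E) x :=
      ((hasFDerivAt_id x).sub_const c).const_smul ρ⁻¹
    have hcomp := ((h.hasGradientAt (hmaps x hx)).hasFDerivAt.comp x hunscale).const_mul (ρ ^ 2)
    rw [hasGradientAt_iff_hasFDerivAt]
    refine (hcomp.congr_fderiv ?_).congr_of_eventuallyEq (.of_eq hv)
    ext z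
    simp
    field_simp
  · rw [norm_smul, Real.norm_of_nonneg hρ.le]
    exact mul_le_mul_of_nonneg_left (h.norm_gradient_le _ (hmaps x hx)) hρ.le
  · have hdist : ‖unscale x - unscale y‖ = ρ⁻¹ * ‖x - y‖ := by
      rw [← smul_sub, sub_sub_sub_cancel_right, norm_smul, norm_inv, Real.norm_of_nonneg hρ.le]
    rw [← smul_sub, norm_smul, Real.norm_of_nonneg hρ.le, mul_assoc ρ, mul_assoc N,
      ← Real.mul_rpow (by positivity) (norm_nonneg _), ← hdist]
    exact mul_le_mul_of_nonneg_left (h.norm_gradient_sub_le _ (hmaps x hx) _ (hmaps y hy)) hρ.le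

/-- Far apart points are handled by the bound on the gradient alone. -/
lemma of_forall_ball {r : ℝ} (hr : 0 < r) (hβ : 0 ≤ β) (hM : 0 ≤ M) (hN : 0 ≤ N)
    (h : ∀ c, HasC1HolderBound w (ball c r) β M N) :
    HasC1HolderBound w univ β M (N + 2 * M * r⁻¹ ^ β) where
  differentiableAt x _ := (h x).differentiableAt x (mem_ball_self hr)
  norm_gradient_le x _ := (h x).norm_gradient_le x (mem_ball_self hr)
  norm_gradient_sub_le x _ y _ := by
    rw [add_mul]
    rcases lt_or_ge ‖x - y‖ r with hnear | hfar
    · have := (h y).norm_gradient_sub_le x (by rwa [mem_ball, dist_eq_norm]) y (mem_ball_self hr)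
      exact this.trans (le_add_of_nonneg_right (by positivity))
    · have hx := (h x).norm_gradient_le x (mem_ball_self hr)
      have hy := (h y).norm_gradient_le y (mem_ball_self hr)
      have hratio : 1 ≤ r⁻¹ ^ β * ‖x - y‖ ^ β := by
        rw [← Real.mul_rpow (by positivity) (norm_nonneg _)]
        exact Real.one_le_rpow ((one_le_inv_mul₀ hr).2 hfar) hβ
      calc ‖gradient w x - gradient w y‖ ≤ 2 * M * 1 := by
            linarith [norm_sub_le (gradient w x) (gradient w y)]
        _ ≤ 2 * M * (r⁻¹ ^ β * ‖x - y‖ ^ β) := by gcongr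
        _ ≤ _ := by rw [← mul_assoc]; exact le_add_of_nonneg_left (by positivity)

/-- The gradients converge along an ultrafilter, by compactness. -/
lemma of_tendsto [ProperSpace E] {ι : Type*} {l : Filter ι} [l.NeBot] {W : ι → E → ℝ}
    (hs : IsOpen s) (hconv : Convex ℝ s) (hβ : 0 < β) (hN : 0 ≤ N)
    (h : ∀ i, HasC1HolderBound (W i) s β M N)
    (hlim : ∀ x ∈ s, Tendsto (fun i => W i x) l (𝓝 (w x))) : HasC1HolderBound w s β M N := by
  have hlimit : ∀ x, ∃ G : E, x ∈ s →
      ‖G‖ ≤ M ∧ Tendsto (fun i => gradient (W i) x) (Ultrafilter.of l) (𝓝 G) := by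
    intro x
    by_cases hx : x ∈ s
    · obtain ⟨G, hG, hlimG⟩ := (isCompact_closedBall (0 : E) M).ultrafilter_le_nhds
        ((Ultrafilter.of l).map fun i => gradient (W i) x)
        (le_principal_iff.2 <| mem_map.2 <| univ_mem' fun i => by
          simpa using (h i).norm_gradient_le x hx)
      exact ⟨G, fun _ => ⟨by simpa using hG, hlimG⟩⟩
    · exact ⟨0, fun hx' => absurd hx' hx⟩
  choose G hG using hlimit
  replace hlim := fun x hx => (hlim x hx).mono_left (Ultrafilter.of_le l)
  refine of_hasGradientAt (G := G) (fun x hx => ?_) (fun x hx => (hG x hx).1)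
    (fun x hx y hy => le_of_tendsto ((hG x hx).2.sub (hG y hy).2).norm
      (.of_forall fun i => (h i).norm_gradient_sub_le x hx y hy))
  rw [hasGradientAt_iff_isLittleO, Asymptotics.isLittleO_iff]
  intro ε hε
  filter_upwards [(tendsto_mul_norm_sub_rpow hβ N x).eventually (gt_mem_nhds hε),
    hs.mem_nhds hx] with y hyε hy
  have htaylor : |w y - w x - ⟪G x, y - x⟫| ≤ N * ‖y - x‖ ^ β * ‖y - x‖ :=
    le_of_tendsto (((hlim y hy).sub (hlim x hx)).sub
      ((hG x hx).2.inner tendsto_const_nhds)).abs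
      (.of_forall fun i => (h i).abs_sub_sub_inner_le hconv hβ.le hN hx hy)
  exact htaylor.trans (mul_le_mul_of_nonneg_right hyε.le (norm_nonneg _))

end HasC1HolderBound

/-- The interior `C^{1,β}` estimate with constant `C` for the solutions of `F(D²w) = g` in the unit
ball. -/
def InteriorEstimate (F : SymOp E → ℝ) (β C : ℝ) : Prop :=
  ∀ (g w : E → ℝ) (Kg Kw : ℝ), ContinuousOn g (ball 0 1) → ContinuousOn w (ball 0 1) →
    (∀ x ∈ ball 0 1, |g x| ≤ Kg) → (∀ x ∈ ball 0 1, |w x| ≤ Kw) →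
    (∀ x ∈ ball 0 1, JetSolutionAt F (fun y _ _ => g y) w x) →
    HasC1HolderBound w (ball 0 (1 / 2)) β (C * (Kw + Kg)) (C * (Kw + Kg))

/-- The equation is invariant under the scaling `w ↦ ρ⁻² w (c + ρ ·)`. -/
lemma InteriorEstimate.hasC1HolderBound_ball {F : SymOp E → ℝ} {β C : ℝ}
    (hreg : InteriorEstimate F β C) {g w : E → ℝ} {Kg Kw ρ : ℝ} {c : E} (hρ : 0 < ρ)
    (hg : ContinuousOn g (ball c ρ)) (hw : ContinuousOn w (ball c ρ))
    (hgK : ∀ x ∈ ball c ρ, |g x| ≤ Kg) (hwK : ∀ x ∈ ball c ρ, |w x| ≤ Kw)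
    (hsol : ∀ x ∈ ball c ρ, JetSolutionAt F (fun y _ _ => g y) w x) :
    HasC1HolderBound w (ball c (ρ / 2)) β (C * (Kw / ρ + ρ * Kg))
      (C * (Kw / ρ + ρ * Kg) * ρ⁻¹ ^ β) := by
  have hmaps : MapsTo (fun x => c + ρ • x) (ball 0 1) (ball c ρ) := fun x hx => by
    rw [mem_ball_zero_iff] at hx
    rw [mem_ball_iff_norm, add_sub_cancel_left, norm_smul, Real.norm_of_nonneg hρ.le]
    exact mul_lt_of_lt_one_right hρ hx
  have hscale : ContinuousOn (fun x : E => c + ρ • x) (ball 0 1) := by fun_prop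
  have hscaled := hreg (fun x => g (c + ρ • x)) (fun x => w (c + ρ • x) / ρ ^ 2) Kg (Kw / ρ ^ 2)
    (hg.comp hscale hmaps) ((hw.comp hscale hmaps).div_const _) (fun x hx => hgK _ (hmaps hx))
    (fun x hx => by
      rw [abs_div, abs_of_pos (by positivity : 0 < ρ ^ 2)]
      have := hwK _ (hmaps hx)
      gcongr)
    (fun x hx => ⟨fun p A hp => (hsol _ (hmaps hx)).1 _ A
        (.of_rescale (b := 0) hρ.ne' (by simpa using hp)),
      fun p A hp => (hsol _ (hmaps hx)).2 _ A (.of_rescale (b := 0) hρ.ne' (by simpa using hp))⟩)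
  have hconst : C * (Kw / ρ + ρ * Kg) = ρ * (C * (Kw / ρ ^ 2 + Kg)) := by field_simp
  rw [hconst, mul_assoc ρ, ← mul_one_div ρ 2]
  exact hscaled.of_rescale hρ

end C1Holder

/-! ### Lipschitz solutions of `F(D²w) = (1 + |Dw|) h` -/

section LipschitzSolutions

lemma JetSolutionAt.freeze_gradient [CompleteSpace E] {F : SymOp E → ℝ} {Q : E → ℝ → E → ℝ}
    {w : E → ℝ} {x : E} (h : JetSolutionAt F Q w x) (hw : DifferentiableAt ℝ w x) :
    JetSolutionAt F (fun y _ _ => Q y (w y) (gradient w y)) w x :=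
  ⟨fun p A hp => hp.eq_gradient hw.hasGradientAt ▸ h.1 p A hp,
    fun p A hp => hp.eq_gradient hw.hasGradientAt ▸ h.2 p A hp⟩

variable [ProperSpace E] {F : SymOp E → ℝ} {Lam L : ℝ≥0} {w h : E → ℝ} {A B K : ℝ}

lemma exists_jetSolution_resolvent (hF : IsElliptic Lam F) {ε : ℝ} (hK : 0 ≤ K) (hε : 0 < ε)
    (hw : LipschitzWith L w) (hsub : ∀ x, JetSubsolutionAt F (fun _ _ _ => -K) w x)
    (hsuper : ∀ x, JetSupersolutionAt F (fun _ _ _ => K) w x) :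
    ∃ v, Continuous v ∧ (∀ x, |v x - w x| ≤ ε * K) ∧
      ∀ x, JetSolutionAt F (fun y _ _ => (v y - w y) / ε) v x := by
  have hwc := hw.continuous
  have hεK : 0 ≤ ε * K := by positivity
  obtain ⟨v, hv, hle, hge, hsol⟩ := exists_lipschitzWith_jetSolution (L := L) hF
    (Q := fun x r _ => (r - w x) / ε) (U := fun x => w x - ε * K) (V := fun x => w x + ε * K)
    (by fun_prop)
    (fun x y r s _ hrs => by
      have := hw.le_add_mul y x
      rw [dist_comm] at this
      gcongr ?_ / ε
      linarith)
    (by fun_prop)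
    (.of_le_add_mul _ fun x y => by linarith [hw.le_add_mul x y])
    (fun x => by simp only; linarith)
    (fun x p A hp => by
      have hbarrier : (w x - ε * K - w x) / ε = -K := by field_simp; ring
      exact hbarrier.trans_le (hsub x p A (by filter_upwards [hp] with y hy; linarith)))
    (fun x p A hp => by
      have hbarrier : (w x + ε * K - w x) / ε = K := by field_simp; ring
      exact (hsuper x p A (by filter_upwards [hp] with y hy; linarith)).trans_eq hbarrier.symm)
  refine ⟨v, hv.continuous, fun x => abs_le.2 ⟨?_, ?_⟩, hsol⟩
  · linarith [hle x]
  · linarith [hge x]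

/-- `w` is the uniform limit of the solutions `v` of `F(D²v) = (v - w)/ε` as `ε → 0`, and the right
hand sides of these equations are continuous and bounded by `K`. -/
lemma InteriorEstimate.hasC1HolderBound_of_lipschitzWith (hF : IsElliptic Lam F) {β C : ℝ}
    (hreg : InteriorEstimate F β C) (hβ : 0 < β) (hC : 0 ≤ C) (hw : LipschitzWith L w)
    (hA : ∀ x, |w x| ≤ A) (hsub : ∀ x, JetSubsolutionAt F (fun _ _ _ => -K) w x)
    (hsuper : ∀ x, JetSupersolutionAt F (fun _ _ _ => K) w x) (hK : 0 ≤ K) (c : E) :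
    HasC1HolderBound w (ball c (1 / 2)) β (C * (A + K + K)) (C * (A + K + K)) := by
  have hA0 : 0 ≤ A := (abs_nonneg _).trans (hA 0)
  have hε (n : ℕ) : (0 : ℝ) < 1 / ((n : ℝ) + 1) := by positivity
  choose v hvc hvw hsol using fun n => exists_jetSolution_resolvent hF hK (hε n) hw hsub hsuper
  refine .of_tendsto (W := v) (l := atTop) isOpen_ball (convex_ball c _) hβ (by positivity)
    (fun n => ?_) (fun x _ => ?_)
  · have hrhs : ∀ x ∈ ball c 1, |(v n x - w x) / (1 / ((n : ℝ) + 1))| ≤ K := fun x _ => by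
      rw [abs_div, abs_of_pos (hε n), div_le_iff₀ (hε n), mul_comm K]
      exact hvw n x
    have hbound : ∀ x ∈ ball c 1, |v n x| ≤ A + K := fun x _ => by
      have hle : 1 / ((n : ℝ) + 1) * K ≤ K :=
        mul_le_of_le_one_left hK ((div_le_one (by positivity)).2 (by simp))
      have := abs_add_le (v n x - w x) (w x)
      rw [sub_add_cancel] at this
      linarith [hvw n x, hA x]
    simpa using hreg.hasC1HolderBound_ball one_pos
      (((hvc n).sub hw.continuous).div_const _).continuousOn (hvc n).continuousOn hrhs hbound
      (fun x _ => hsol n x)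
  · refine tendsto_iff_norm_sub_tendsto_zero.2 <|
      squeeze_zero (fun _ => norm_nonneg _) (fun n => hvw n x) ?_
    simpa using tendsto_one_div_add_atTop_nhds_zero_nat.mul_const K

lemma abs_one_add_norm_mul_le {V : Type*} [SeminormedAddCommGroup V] {p : V} {a : ℝ}
    (hp : ‖p‖ ≤ B) (ha : |a| ≤ K) :
    |(1 + ‖p‖) * a| ≤ (1 + B) * K := by
  rw [abs_mul, abs_of_nonneg (by positivity)]
  have : 0 ≤ B := (norm_nonneg p).trans hp
  gcongr

lemma InteriorEstimate.differentiable_and_continuous_gradient (hF : IsElliptic Lam F) {β C : ℝ}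
    (hreg : InteriorEstimate F β C) (hβ : 0 < β) (hC : 0 ≤ C) (hw : LipschitzWith L w)
    (hA : ∀ x, |w x| ≤ A) (hK : ∀ x, |h x| ≤ K)
    (hsol : ∀ x, JetSolutionAt F (fun y _ p => (1 + ‖p‖) * h y) w x) :
    Differentiable ℝ w ∧ Continuous (gradient w) := by
  have hK0 : 0 ≤ K := (abs_nonneg _).trans (hK 0)
  have hbound := hreg.hasC1HolderBound_of_lipschitzWith hF hβ hC hw hA (K := (1 + L) * K)
    (fun x p A hp => (abs_le.1 (abs_one_add_norm_mul_le (hp.norm_le hw) (hK x))).1.trans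
      ((hsol x).1 p A hp))
    (fun x p A hp => ((hsol x).2 p A hp).trans
      (abs_le.1 (abs_one_add_norm_mul_le (hp.norm_le hw) (hK x))).2) (by positivity)
  exact ⟨fun x => (hbound x).differentiableAt x (mem_ball_self (by norm_num)),
    continuous_iff_continuousAt.2 fun x =>
      (hbound x).continuousAt_gradient hβ (ball_mem_nhds x (by norm_num))⟩

lemma InteriorEstimate.hasC1HolderBound_of_norm_gradient_le {β C ρ : ℝ}
    (hreg : InteriorEstimate F β C) (hw : Differentiable ℝ w) (hwc : Continuous (gradient w))
    (hB : ∀ x, ‖gradient w x‖ ≤ B) (hA : ∀ x, |w x| ≤ A) (hh : Continuous h)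
    (hK : ∀ x, |h x| ≤ K) (hsol : ∀ x, JetSolutionAt F (fun y _ p => (1 + ‖p‖) * h y) w x)
    (hρ : 0 < ρ) (c : E) :
    HasC1HolderBound w (ball c (ρ / 2)) β (C * (A / ρ + ρ * ((1 + B) * K)))
      (C * (A / ρ + ρ * ((1 + B) * K)) * ρ⁻¹ ^ β) :=
  hreg.hasC1HolderBound_ball (g := fun x => (1 + ‖gradient w x‖) * h x) hρ
    (by fun_prop) hw.continuous.continuousOn
    (fun x _ => abs_one_add_norm_mul_le (hB x) (hK x)) (fun x _ => hA x)
    (fun x _ => (hsol x).freeze_gradient (hw x))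

/-- On balls of small radius `ρ` the contribution `C ρ K sup |Dw|` of the right-hand side to the
interior estimate is absorbed, whatever the Lipschitz constant of `w`. -/
lemma InteriorEstimate.norm_gradient_le {β C ρ : ℝ} (hreg : InteriorEstimate F β C)
    (hw : LipschitzWith L w) (hwd : Differentiable ℝ w) (hwc : Continuous (gradient w))
    (hA : ∀ x, |w x| ≤ A) (hh : Continuous h) (hK : ∀ x, |h x| ≤ K)
    (hsol : ∀ x, JetSolutionAt F (fun y _ p => (1 + ‖p‖) * h y) w x)
    (hρ : 0 < ρ) (hρK : C * (ρ * K) ≤ 1 / 2) (x : E) :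
    ‖gradient w x‖ ≤ 2 * (C * (A / ρ)) + 1 := by
  set S := ⨆ y, ‖gradient w y‖
  have hbdd : BddAbove (range fun y => ‖gradient w y‖) := by
    refine ⟨L, forall_mem_range.2 fun y => ?_⟩
    simpa [gradient] using norm_fderiv_le_of_lipschitz ℝ hw (x₀ := y)
  have hle (y) : ‖gradient w y‖ ≤ S := le_ciSup hbdd y
  have hS0 : 0 ≤ S := (norm_nonneg _).trans (hle 0)
  have hS : S ≤ C * (A / ρ + ρ * ((1 + S) * K)) := ciSup_le fun y =>
    (hreg.hasC1HolderBound_of_norm_gradient_le hwd hwc hle hA hh hK hsol hρ y).norm_gradient_le y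
      (mem_ball_self (by positivity))
  have hsplit : C * (A / ρ + ρ * ((1 + S) * K)) = C * (A / ρ) + C * (ρ * K) * (1 + S) := by ring
  have habsorb : C * (ρ * K) * (1 + S) ≤ 1 / 2 * (1 + S) := by gcongr
  linarith [hle x]

theorem InteriorEstimate.exists_hasC1HolderBound_univ (hF : IsElliptic Lam F) {β C : ℝ}
    (hreg : InteriorEstimate F β C) (hβ : 0 < β) (hC : 0 ≤ C) (hA : 0 ≤ A) (hK : 0 ≤ K) :
    ∃ M N, 0 ≤ N ∧ ∀ (w h : E → ℝ) (L : ℝ≥0), LipschitzWith L w → (∀ x, |w x| ≤ A) →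
      Continuous h → (∀ x, |h x| ≤ K) →
      (∀ x, JetSolutionAt F (fun y _ p => (1 + ‖p‖) * h y) w x) →
      HasC1HolderBound w univ β M N := by
  set ρ : ℝ := 1 / (2 * C * K + 1) with hρdef
  have hρ : 0 < ρ := by positivity
  have hρK : C * (ρ * K) ≤ 1 / 2 := by
    rw [hρdef, one_div, mul_left_comm, inv_mul_le_iff₀ (by positivity)]
    linarith
  set B : ℝ := 2 * (C * (A / ρ)) + 1
  set N : ℝ := C * (A + (1 + B) * K)
  have hB : 0 ≤ B := by positivity
  have hN : 0 ≤ N := by positivity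
  refine ⟨N, N + 2 * N * (1 / 2 : ℝ)⁻¹ ^ β, by positivity, fun w h L hw hwA hh hhK hsol => ?_⟩
  obtain ⟨hwd, hwc⟩ := hreg.differentiable_and_continuous_gradient hF hβ hC hw hwA hhK hsol
  have hgrad := hreg.norm_gradient_le hw hwd hwc hwA hh hhK hsol hρ hρK
  refine .of_forall_ball one_half_pos hβ.le hN hN fun c => ?_
  simpa using hreg.hasC1HolderBound_of_norm_gradient_le hwd hwc hgrad hwA hh hhK hsol one_pos c

end LipschitzSolutions

/-! ### Approximation by Lipschitz solutions -/

section ConeSupConv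

variable {X : Type*} [PseudoMetricSpace X] {L : ℝ≥0} {s : Set X} {u : X → ℝ} {x y z : X}

/-- The sup-convolution of `u` on `s` with the cone of slope `L`. -/
def coneSupConv (L : ℝ≥0) (s : Set X) (u : X → ℝ) (x : X) : ℝ :=
  sSup ((fun z => u z - L * dist x z) '' s)

lemma continuousOn_sub_mul_dist (hu : ContinuousOn u s) :
    ContinuousOn (fun z => u z - L * dist x z) s :=
  hu.sub (by fun_prop)

lemma sub_mul_dist_le_coneSupConv (hs : IsCompact s) (hu : ContinuousOn u s) (hz : z ∈ s) :
    u z - L * dist x z ≤ coneSupConv L s u x :=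
  le_csSup (hs.bddAbove_image (continuousOn_sub_mul_dist hu)) (mem_image_of_mem _ hz)

lemma le_coneSupConv (hs : IsCompact s) (hu : ContinuousOn u s) (hx : x ∈ s) :
    u x ≤ coneSupConv L s u x := by
  simpa using sub_mul_dist_le_coneSupConv (L := L) (x := x) hs hu hx

lemma exists_coneSupConv_eq (hs : IsCompact s) (hne : s.Nonempty) (hu : ContinuousOn u s)
    (x : X) : ∃ y ∈ s, coneSupConv L s u x = u y - L * dist x y :=
  hs.exists_sSup_image_eq hne (continuousOn_sub_mul_dist hu)

lemma coneSupConv_le (hne : s.Nonempty) {A : ℝ} (hA : ∀ z ∈ s, u z ≤ A) :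
    coneSupConv L s u x ≤ A :=
  csSup_le (hne.image _) <| forall_mem_image.2 fun z hz =>
    (sub_le_self _ (by positivity)).trans (hA z hz)

lemma lipschitzWith_coneSupConv (hs : IsCompact s) (hne : s.Nonempty) (hu : ContinuousOn u s) :
    LipschitzWith L (coneSupConv L s u) := by
  refine LipschitzWith.of_le_add_mul L fun x y => ?_
  obtain ⟨z, hz, hxz⟩ := exists_coneSupConv_eq (L := L) hs hne hu x
  have hyz := sub_mul_dist_le_coneSupConv (L := L) (x := y) hs hu hz
  have htri : L * dist y z ≤ L * (dist x y + dist x z) := by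
    gcongr
    exact dist_triangle_left y z x
  linarith

/-- Steep cones force the maximizing point `y` to stay close to `x`. -/
lemma exists_forall_dist_lt_of_coneSupConv_eq (hs : IsCompact s) (hu : ContinuousOn u s) {τ : ℝ}
    (hτ : 0 < τ) :
    ∃ L : ℝ≥0, ∀ x ∈ s, ∀ y ∈ s, coneSupConv L s u x = u y - L * dist x y → dist x y < τ := by
  obtain ⟨A, hA⟩ := hs.exists_bound_of_continuousOn hu
  simp only [Real.norm_eq_abs, abs_le] at hA
  refine ⟨((2 * A + 1) / τ).toNNReal, fun x hx y hy hxy => ?_⟩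
  have hA0 : 0 ≤ A := by linarith [hA x hx]
  have hle := (le_coneSupConv hs hu hx).trans_eq hxy
  rw [Real.coe_toNNReal _ (by positivity)] at hle
  refine lt_of_mul_lt_mul_left ?_ (show 0 ≤ (2 * A + 1) / τ by positivity)
  rw [div_mul_cancel₀ _ hτ.ne']
  linarith [hA x hx, hA y hy]

end ConeSupConv

section LinearGrowth

variable [CompleteSpace E] {F : SymOp E → ℝ} {K : ℝ} {u : E → ℝ} {s : Set E} {x y p : E}
  {A : SymOp E}

lemma IsSuperjet.of_coneSupConv {L : ℝ≥0} (h : IsSuperjet (coneSupConv L s u) x p A)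
    (hs : IsCompact s) (hu : ContinuousOn u s) (hy : s ∈ 𝓝 y)
    (hxy : coneSupConv L s u x = u y - L * dist x y) : IsSuperjet u y p A := by
  have hshift : Tendsto (fun z => z + (x - y)) (𝓝 y) (𝓝 x) :=
    Continuous.tendsto' (by fun_prop) _ _ (add_sub_cancel _ _)
  filter_upwards [hshift.eventually h, hy] with z hz hzs
  have hle := sub_mul_dist_le_coneSupConv (L := L) (x := z + (x - y)) hs hu hzs
  rw [dist_eq_norm, add_sub_cancel_left, ← dist_eq_norm] at hle
  rw [show z + (x - y) - x = z - y by abel] at hz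
  linarith

/-- The differential inequality `|F(D²u)| ≤ K (1 + |Du|)` at the point `x`, in the sense of
jets. -/
def HasLinearGrowthAt (F : SymOp E → ℝ) (K : ℝ) (u : E → ℝ) (x : E) : Prop :=
  JetSubsolutionAt F (fun _ _ p => -(K * (1 + ‖p‖))) u x ∧
    JetSupersolutionAt F (fun _ _ p => K * (1 + ‖p‖)) u x

lemma HasLinearGrowthAt.dual (h : HasLinearGrowthAt F K u x) :
    HasLinearGrowthAt (dualOp F) K (-u) x := by
  refine ⟨by simpa only [norm_neg] using jetSupersolutionAt_iff_dual.1 h.2, ?_⟩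
  rw [jetSupersolutionAt_iff_dual]
  simpa only [dualOp_dualOp, norm_neg, neg_neg] using h.1

/-- `S` approximates `u` on `s` from below with precision `δ`: a globally Lipschitz function with
`F(D²S) ≥ -K (1 + |DS|)` on `s`. -/
structure IsLipschitzMinorant (F : SymOp E → ℝ) (K A δ : ℝ) (L : ℝ≥0) (u S : E → ℝ) (s : Set E) :
    Prop where
  lipschitzWith : LipschitzWith L S
  le_bound : ∀ x, S x ≤ A - δ
  sub_le : ∀ x ∈ s, u x - δ ≤ S x
  le_sub_half : ∀ x ∈ s, S x ≤ u x - δ / 2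
  jetSubsolutionAt : ∀ x ∈ s, JetSubsolutionAt F (fun _ _ p => -(K * (1 + ‖p‖))) S x

lemma IsSuperjet.add_const_iff {c : ℝ} :
    IsSuperjet (fun y => u y + c) x p A ↔ IsSuperjet u x p A :=
  eventually_congr <| .of_forall fun y => by rw [add_right_comm, add_le_add_iff_right]

lemma exists_isLipschitzMinorant [ProperSpace E] {x₀ : E} {R' R B δ : ℝ} (hR : 0 ≤ R)
    (hRR : R' < R) (hδ : 0 < δ) (hu : ContinuousOn u (closedBall x₀ R))
    (hB : ∀ x ∈ closedBall x₀ R, u x ≤ B)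
    (hsub : ∀ x ∈ ball x₀ R, JetSubsolutionAt F (fun _ _ p => -(K * (1 + ‖p‖))) u x) :
    ∃ L S, IsLipschitzMinorant F K B δ L u S (ball x₀ R') := by
  have hcpt : IsCompact (closedBall x₀ R) := isCompact_closedBall _ _
  have hne : (closedBall x₀ R).Nonempty := ⟨x₀, mem_closedBall_self hR⟩
  have hmem : ∀ x ∈ ball x₀ R', x ∈ closedBall x₀ R := fun x hx =>
    ball_subset_closedBall (ball_subset_ball hRR.le hx)
  obtain ⟨τ, hτ, hosc⟩ := Metric.uniformContinuousOn_iff.1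
    (hcpt.uniformContinuousOn_of_continuous hu) (δ / 2) (half_pos hδ)
  obtain ⟨L, hL⟩ := exists_forall_dist_lt_of_coneSupConv_eq hcpt hu
    (lt_min hτ (sub_pos.2 hRR))
  refine ⟨L, fun x => coneSupConv L (closedBall x₀ R) u x - δ, ?_, ?_, ?_, ?_, ?_⟩
  · exact .of_dist_le_mul fun x y => by
      simpa using (lipschitzWith_coneSupConv hcpt hne hu).dist_le_mul x y
  · exact fun x => sub_le_sub_right (coneSupConv_le hne hB) δ
  · exact fun x hx => sub_le_sub_right (le_coneSupConv hcpt hu (hmem x hx)) δ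
  · intro x hx
    obtain ⟨y, hy, hxy⟩ := exists_coneSupConv_eq (L := L) hcpt hne hu x
    have hdist := (hL x (hmem x hx) y hy hxy).trans_le (min_le_left _ _)
    have hosc' := (abs_lt.1 (hosc x (hmem x hx) y hy hdist)).1
    have hcone : 0 ≤ L * dist x y := by positivity
    linarith
  · intro x hx p A hp
    obtain ⟨y, hy, hxy⟩ := exists_coneSupConv_eq (L := L) hcpt hne hu x
    have hdist := (hL x (hmem x hx) y hy hxy).trans_le (min_le_right _ _)
    have hyR : y ∈ ball x₀ R := by
      rw [mem_ball] at hx ⊢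
      linarith [dist_triangle_left y x₀ x]
    simp only [sub_eq_add_neg, IsSuperjet.add_const_iff] at hp
    exact hsub y hyR p A (hp.of_coneSupConv hcpt hu (closedBall_mem_nhds_of_mem hyR) hxy)

/-- `ψ` is a penalty of height `m` for leaving `s`, which vanishes on `t`. -/
structure IsPenalty (ψ : E → ℝ) (t s : Set E) (m : ℝ) (c : ℝ≥0) : Prop where
  lipschitzWith : LipschitzWith c ψ
  nonneg : ∀ x, 0 ≤ ψ x
  eq_zero : ∀ x ∈ t, ψ x = 0
  eq_height : ∀ x ∉ s, ψ x = m
  exists_isSuperjet : ∀ x, ∃ a, ‖a‖ ≤ c ∧ IsSuperjet ψ x a ((c : ℝ) • 1)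

lemma exists_hasC1HolderBound_of_hasCompactSupport {b : E → ℝ} (hb : ContDiff ℝ 2 b)
    (hsupp : HasCompactSupport b) : ∃ M N : ℝ≥0, LipschitzWith M b ∧
      HasC1HolderBound b univ 1 M N := by
  obtain ⟨M, hM⟩ := (hb.of_le one_le_two).lipschitzWith_of_hasCompactSupport hsupp one_ne_zero
  obtain ⟨N, hN⟩ := (hb.fderiv_right (m := 1) le_rfl).lipschitzWith_of_hasCompactSupport
    (hsupp.fderiv ℝ) one_ne_zero
  refine ⟨M, N, hM, fun x _ => hb.differentiable two_ne_zero x, fun x _ => ?_, fun x _ y _ => ?_⟩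
  · simpa [gradient] using norm_fderiv_le_of_lipschitz ℝ hM (x₀ := x)
  · simpa [gradient, ← map_sub, dist_eq_norm] using hN.dist_le_mul x y

lemma HasC1HolderBound.isSuperjet {w : E → ℝ} {M : ℝ} {N c : ℝ≥0}
    (h : HasC1HolderBound w univ 1 M N) (hc : 2 * N ≤ c) (x : E) :
    IsSuperjet w x (gradient w x) ((c : ℝ) • 1) := by
  refine .of_forall fun y => ?_
  have htaylor := (abs_le.1 (h.abs_sub_sub_inner_le convex_univ zero_le_one N.2 (mem_univ x)
    (mem_univ y))).2
  rw [Real.rpow_one, mul_assoc, ← sq] at htaylor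
  have hN : N * ‖y - x‖ ^ 2 ≤ c / 2 * ‖y - x‖ ^ 2 := by
    gcongr
    rw [le_div_iff₀' two_pos]
    exact_mod_cast hc
  rw [← zero_add ((c : ℝ) • 1), quadPoly_add_smul_one, quadPoly, AddSubgroup.coe_zero, zero_apply,
    inner_zero_left]
  linarith

lemma exists_isPenalty [ProperSpace E] (x₀ : E) {r R m : ℝ} (hr : 0 < r) (hrR : r < R)
    (hm : 0 ≤ m) : ∃ ψ c, IsPenalty ψ (ball x₀ r) (ball x₀ R) m c := by
  have := FiniteDimensional.of_locallyCompactSpace ℝ (E := E)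
  let b : ContDiffBump x₀ := ⟨r, R, hr, hrR⟩
  obtain ⟨M, N, hM, hb⟩ := exists_hasC1HolderBound_of_hasCompactSupport
    (b := fun x => -m * b x) (contDiff_const.mul b.contDiff) b.hasCompactSupport.mul_left
  have hMc : M ≤ max M (2 * N) := le_max_left _ _
  refine ⟨fun x => -m * b x + m, max M (2 * N), ?_, fun x => ?_, fun x hx => ?_, fun x hx => ?_,
    fun x => ⟨gradient (fun x => -m * b x) x, ?_, ?_⟩⟩
  · exact .of_dist_le_mul fun x y => by simpa using (hM.weaken hMc).dist_le_mul x y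
  · nlinarith [b.le_one (x := x)]
  · simp [b.one_of_mem_closedBall (ball_subset_closedBall hx)]
  · have hbx : b x = 0 := by rwa [← Function.notMem_support, b.support_eq]
    simp [hbx]
  · exact (hb.norm_gradient_le x (mem_univ x)).trans (NNReal.coe_le_coe.2 hMc)
  · exact IsSuperjet.add_const_iff.2 (hb.isSuperjet (le_max_right _ _) x)

end LinearGrowth

section Penalization

/-- Truncation of a real number to `[-k, k]`. -/
def trunc (k t : ℝ) : ℝ := max (-k) (min k t)

lemma trunc_neg {k : ℝ} (hk : 0 ≤ k) (t : ℝ) : trunc k (-t) = -trunc k t := by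
  rw [trunc, trunc, max_min_distrib_left, max_eq_right (neg_le_self hk), ← min_neg_neg,
    ← max_neg_neg, neg_neg, max_comm]

lemma abs_trunc_le {k : ℝ} (hk : 0 ≤ k) (t : ℝ) : |trunc k t| ≤ k :=
  abs_le.2 ⟨le_max_left _ _, max_le (neg_le_self hk) (min_le_left _ _)⟩

lemma monotone_trunc (k : ℝ) : Monotone (trunc k) := fun _ _ h =>
  max_le_max le_rfl (min_le_min le_rfl h)

@[fun_prop]
lemma continuous_trunc (k : ℝ) : Continuous (trunc k) := by unfold trunc; fun_prop

lemma trunc_nonpos {k t : ℝ} (hk : 0 ≤ k) (ht : t ≤ 0) : trunc k t ≤ 0 :=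
  max_le (neg_nonpos.2 hk) ((min_le_right _ _).trans ht)

lemma trunc_le_neg {k t : ℝ} (ht : t ≤ -k) : trunc k t ≤ -k :=
  max_le le_rfl ((min_le_right _ _).trans ht)

variable {V : Type*} [SeminormedAddCommGroup V]

/-- The right-hand side of the penalized equation `F(D²w) = (1 + |Dw|) trunc ((w - z) / ε)`, whose
solutions are driven towards `z`. -/
def penalizedRHS (k ε : ℝ) (z : V → ℝ) (x : V) (r : ℝ) (p : V) : ℝ :=
  (1 + ‖p‖) * trunc k ((r - z x) / ε)

lemma dual_penalizedRHS {k : ℝ} (hk : 0 ≤ k) (ε : ℝ) (z : V → ℝ) :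
    (fun x r p => -penalizedRHS k ε z x (-r) (-p)) = penalizedRHS k ε (-z) := by
  ext x r p
  rw [penalizedRHS, penalizedRHS, norm_neg, ← mul_neg, ← trunc_neg hk, ← neg_div, neg_sub',
    neg_neg, Pi.neg_apply]

lemma penalizedRHS_le_penalizedRHS {k ε r s : ℝ} {z : V → ℝ} {L : ℝ≥0} {x y : V} (hε : 0 < ε)
    (hz : LipschitzWith L z) (hrs : r + L * dist x y ≤ s) (p : V) :
    penalizedRHS k ε z x r p ≤ penalizedRHS k ε z y s p := by
  have hle : (r - z x) / ε ≤ (s - z y) / ε := by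
    have := hz.le_add_mul y x
    rw [dist_comm] at this
    gcongr ?_ / ε
    linarith
  unfold penalizedRHS
  gcongr
  exact monotone_trunc k hle

/-- The lower barrier `max (-A) (S - ψ)` of the penalized problem. -/
def lowerBarrier (A : ℝ) (S ψ : V → ℝ) : V → ℝ := (fun _ => -A) ⊔ (S - ψ)

lemma lipschitzWith_lowerBarrier {L L' : ℝ≥0} {A : ℝ} {S ψ : V → ℝ} (hS : LipschitzWith L S)
    (hψ : LipschitzWith L' ψ) : LipschitzWith (L + L') (lowerBarrier A S ψ) :=
  (hS.sub hψ).const_max (-A)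

variable [CompleteSpace E] {F : SymOp E → ℝ} {Lam c L : ℝ≥0} {K A δ ε : ℝ}
  {u S ψ z : E → ℝ} {s t : Set E} {x : E}

lemma JetSubsolutionAt.sub_of_isSuperjet {a : E} (hF : IsElliptic Lam F) (hK : 0 ≤ K)
    (hS : JetSubsolutionAt F (fun _ _ p => -(K * (1 + ‖p‖))) S x) (ha : ‖a‖ ≤ c)
    (hψ : IsSuperjet ψ x a ((c : ℝ) • 1)) :
    JetSubsolutionAt F (fun _ _ p => -((K * (1 + c) + Lam * c) * (1 + ‖p‖))) (S - ψ) x := by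
  intro p A hp
  have hjet : IsSuperjet S x (p + a) (A + (c : ℝ) • 1) := by
    simpa only [sub_add_cancel] using hp.add hψ
  have hle := (hS _ _ hjet).trans (hF.add_smul_one_le A c c.2)
  have hpa : K * (1 + ‖p + a‖) ≤ K * (1 + (‖p‖ + c)) := by
    gcongr
    exact norm_add_le_of_le le_rfl ha
  have hrest : 0 ≤ (K * c + Lam * c) * ‖p‖ := by positivity
  linarith

/-- Where the barrier is the constant `-A ≤ z`, the penalized right-hand side is nonpositive;
elsewhere it is saturated at its minimum. -/
lemma jetSubsolutionAt_lowerBarrier (hF : IsElliptic Lam F) (hF0 : 0 ≤ F 0) (hK : 0 ≤ K)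
    (hε : 0 < ε) (hδ : 0 ≤ δ) (hS : IsLipschitzMinorant F K A δ L u S s)
    (hψ : IsPenalty ψ t s (2 * A) c) (hAz : -A ≤ z x)
    (hSz : x ∈ s → S x - ψ x + ε * (K * (1 + c) + Lam * c) ≤ z x) :
    JetSubsolutionAt F (penalizedRHS (K * (1 + c) + Lam * c) ε z) (lowerBarrier A S ψ) x := by
  set k := K * (1 + c) + Lam * c
  have hk0 : 0 ≤ k := by positivity
  rcases le_or_gt ((S - ψ) x) (-A) with hle | hlt
  · refine JetSubsolutionAt.sup_of_le ?_ hle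
    have hjet : IsSubjet (fun _ => -A) x (0 : E) 0 := .of_forall fun y => by simp [quadPoly]
    refine hjet.jetSubsolutionAt hF.monotone (le_trans ?_ hF0)
    exact mul_nonpos_of_nonneg_of_nonpos (by positivity)
      (trunc_nonpos hk0 (div_nonpos_of_nonpos_of_nonneg (sub_nonpos.2 hAz) hε.le))
  · have hxs : x ∈ s := by
      by_contra hx
      have := hS.le_bound x
      rw [Pi.sub_apply, hψ.eq_height x hx] at hlt
      linarith
    rw [lowerBarrier, sup_comm]
    refine JetSubsolutionAt.sup_of_le (fun p B hp => ?_) hlt.le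
    obtain ⟨a, ha, hψa⟩ := hψ.exists_isSuperjet x
    refine le_trans ?_
      ((hS.jetSubsolutionAt x hxs).sub_of_isSuperjet hF hK ha hψa p B hp)
    simp only [penalizedRHS, ← neg_mul, mul_comm (1 + ‖p‖)]
    gcongr
    refine trunc_le_neg ?_
    rw [div_le_iff₀ hε, Pi.sub_apply]
    linarith [hSz hxs]

/-- The upper barrier comes from a minorant of `-u` for the dual operator. -/
lemma jetSupersolutionAt_neg_lowerBarrier (hF : IsElliptic Lam F) (hF0 : F 0 ≤ 0) (hK : 0 ≤ K)
    (hε : 0 < ε) (hδ : 0 ≤ δ) (hS : IsLipschitzMinorant (dualOp F) K A δ L u S s)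
    (hψ : IsPenalty ψ t s (2 * A) c) (hzA : z x ≤ A)
    (hSz : x ∈ s → S x - ψ x + ε * (K * (1 + c) + Lam * c) ≤ -z x) :
    JetSupersolutionAt F (penalizedRHS (K * (1 + c) + Lam * c) ε z) (-lowerBarrier A S ψ) x := by
  rw [jetSupersolutionAt_iff_dual, neg_neg, dual_penalizedRHS (by positivity)]
  exact jetSubsolutionAt_lowerBarrier hF.dual (by simpa [dualOp] using hF0) hK hε hδ hS hψ
    (neg_le_neg hzA) hSz

lemma lowerBarrier_le_neg_lowerBarrier {L' : ℝ≥0} {T : E → ℝ} (hA : 0 ≤ A) (hδ : 0 ≤ δ)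
    (hS : IsLipschitzMinorant F K A δ L u S s)
    (hT : IsLipschitzMinorant (dualOp F) K A δ L' (-u) T s) (hψ : IsPenalty ψ t s (2 * A) c) :
    lowerBarrier A S ψ ≤ -lowerBarrier A T ψ := by
  intro x
  have hψx := hψ.nonneg x
  have hSx := hS.le_bound x
  have hTx := hT.le_bound x
  have hsum : S x - ψ x ≤ -(T x - ψ x) := by
    by_cases hx : x ∈ s
    · have hSu := hS.le_sub_half x hx
      have hTu := hT.le_sub_half x hx
      rw [Pi.neg_apply] at hTu
      linarith
    · rw [hψ.eq_height x hx]
      linarith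
  exact max_le (neg_le_neg (max_le (by linarith) (by rw [Pi.sub_apply]; linarith)))
    (le_neg.2 (max_le (by rw [Pi.sub_apply]; linarith) (le_neg.2 hsum)))

lemma abs_sub_le_of_lowerBarrier_le {L' : ℝ≥0} {T w : E → ℝ}
    (hS : IsLipschitzMinorant F K A δ L u S s)
    (hT : IsLipschitzMinorant (dualOp F) K A δ L' (-u) T s) (hψ : IsPenalty ψ t s (2 * A) c)
    (hts : t ⊆ s) (hSw : lowerBarrier A S ψ ≤ w) (hwT : w ≤ -lowerBarrier A T ψ) (hx : x ∈ t) :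
    |w x - u x| ≤ δ := by
  have hSx := (le_max_right _ _).trans (hSw x)
  have hTx := (le_max_right _ _).trans (le_neg.2 (hwT x))
  have hSu := hS.sub_le x (hts hx)
  have hTu := hT.sub_le x (hts hx)
  rw [Pi.sub_apply, hψ.eq_zero x hx] at hSx hTx
  rw [Pi.neg_apply] at hTu
  exact abs_le.2 ⟨by linarith, by linarith⟩

lemma exists_lipschitzWith_between {L' : ℝ≥0} {T : E → ℝ} (hA : 0 ≤ A) (hδ : 0 ≤ δ)
    (hS : IsLipschitzMinorant F K A δ L u S s)
    (hT : IsLipschitzMinorant (dualOp F) K A δ L' (-u) T s) :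
    ∃ z, LipschitzWith L z ∧ (∀ x, |z x| ≤ A) ∧ (∀ x, S x + δ / 2 ≤ z x) ∧
      ∀ x ∈ s, T x + δ / 2 ≤ -z x := by
  refine ⟨fun x => max (-A) (S x + δ / 2), ?_, fun x => abs_le.2 ⟨le_max_left _ _, ?_⟩,
    fun x => le_max_right _ _, fun x hx => ?_⟩
  · exact LipschitzWith.const_max (.of_dist_le_mul fun x y => by
      simpa using hS.lipschitzWith.dist_le_mul x y) (-A)
  · exact max_le (by linarith) (by linarith [hS.le_bound x])
  · have hSu := hS.le_sub_half x hx
    have hTu := hT.le_sub_half x hx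
    rw [Pi.neg_apply] at hTu
    exact le_neg.2 (max_le (by linarith [hT.le_bound x]) (by linarith))

/-- The penalized problem between the barriers. The bounds on `w` and `h` do not depend on `δ`. -/
lemma exists_lipschitzWith_jetSolution_near [ProperSpace E] {L' : ℝ≥0} {T : E → ℝ}
    (hF : IsElliptic Lam F) (hF0 : F 0 = 0) (hK : 0 ≤ K) (hA : 0 ≤ A) (hδ : 0 < δ)
    (hS : IsLipschitzMinorant F K A δ L u S s)
    (hT : IsLipschitzMinorant (dualOp F) K A δ L' (-u) T s) (hψ : IsPenalty ψ t s (2 * A) c)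
    (hts : t ⊆ s) :
    ∃ (w h : E → ℝ) (L : ℝ≥0), LipschitzWith L w ∧ (∀ x, |w x| ≤ A) ∧ Continuous h ∧
      (∀ x, |h x| ≤ K * (1 + c) + Lam * c) ∧
      (∀ x, JetSolutionAt F (fun y _ p => (1 + ‖p‖) * h y) w x) ∧ ∀ x ∈ t, |w x - u x| ≤ δ := by
  set k := K * (1 + c) + Lam * c
  have hk0 : 0 ≤ k := by positivity
  obtain ⟨ε, hε, hεk⟩ : ∃ ε > 0, ε * k ≤ δ / 2 :=
    ⟨δ / 2 / (k + 1), by positivity, by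
      rw [div_mul_eq_mul_div, div_le_iff₀ (by positivity)]
      gcongr
      exact le_add_of_nonneg_right zero_le_one⟩
  obtain ⟨z, hz, hzA, hzS, hzT⟩ := exists_lipschitzWith_between hA hδ.le hS hT
  have hzc := hz.continuous
  obtain ⟨w, hw, hSw, hwT, hsol⟩ := exists_lipschitzWith_jetSolution
    (Q := penalizedRHS k ε z) (L := max L (L' + c)) hF (by unfold penalizedRHS; fun_prop)
    (fun x y r q p h => penalizedRHS_le_penalizedRHS hε (hz.weaken (le_max_left _ _)) h p)
    (lipschitzWith_lowerBarrier hS.lipschitzWith hψ.lipschitzWith).continuous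
    ((lipschitzWith_lowerBarrier hT.lipschitzWith hψ.lipschitzWith).neg.weaken (le_max_right _ _))
    (lowerBarrier_le_neg_lowerBarrier hA hδ.le hS hT hψ)
    (fun x => jetSubsolutionAt_lowerBarrier hF hF0.ge hK hε hδ.le hS hψ (neg_le_of_abs_le (hzA x))
      fun _ => by linarith [hzS x, hψ.nonneg x])
    (fun x => jetSupersolutionAt_neg_lowerBarrier hF hF0.le hK hε hδ.le hT hψ
      (le_of_abs_le (hzA x)) fun hx => by linarith [hzT x hx, hψ.nonneg x])
  have hwc := hw.continuous
  exact ⟨w, fun x => trunc k ((w x - z x) / ε), _, hw,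
    fun x => abs_le.2 ⟨(le_max_left _ _).trans (hSw x), (hwT x).trans (neg_le.2 (le_max_left _ _))⟩,
    by fun_prop, fun x => abs_trunc_le hk0 _, hsol,
    fun x hx => abs_sub_le_of_lowerBarrier_le hS hT hψ hts hSw hwT hx⟩

lemma HasLinearGrowthAt.exists_approx [ProperSpace E] {x₀ : E} {r R : ℝ} (hF : IsElliptic Lam F)
    (hF0 : F 0 = 0) (hK : 0 ≤ K) (hr : 0 < r) (hrR : r < R) (hu : ContinuousOn u (ball x₀ R))
    (hgrowth : ∀ x ∈ ball x₀ R, HasLinearGrowthAt F K u x) :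
    ∃ A k : ℝ, 0 ≤ A ∧ 0 ≤ k ∧ ∀ δ > 0, ∃ (w h : E → ℝ) (L : ℝ≥0), LipschitzWith L w ∧
      (∀ x, |w x| ≤ A) ∧ Continuous h ∧ (∀ x, |h x| ≤ k) ∧
      (∀ x, JetSolutionAt F (fun y _ p => (1 + ‖p‖) * h y) w x) ∧
      ∀ x ∈ ball x₀ r, |w x - u x| ≤ δ := by
  obtain ⟨r₁, hr₁, hr₁R⟩ := exists_between hrR
  obtain ⟨r₂, hr₂, hr₂R⟩ := exists_between hr₁R
  have hr₂0 : 0 ≤ r₂ := (hr.trans (hr₁.trans hr₂)).le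
  have hsubset : closedBall x₀ r₂ ⊆ ball x₀ R := closedBall_subset_ball hr₂R
  have hgrowth₂ : ∀ x ∈ ball x₀ r₂, HasLinearGrowthAt F K u x := fun x hx =>
    hgrowth x (hsubset (ball_subset_closedBall hx))
  have hu₂ := hu.mono hsubset
  obtain ⟨A, hA⟩ := (isCompact_closedBall x₀ r₂).exists_bound_of_continuousOn hu₂
  simp only [Real.norm_eq_abs, abs_le'] at hA
  have hA0 : 0 ≤ A := by linarith [hA x₀ (mem_closedBall_self hr₂0)]
  obtain ⟨ψ, c, hψ⟩ := exists_isPenalty x₀ hr hr₁ (mul_nonneg zero_le_two hA0)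
  refine ⟨A, K * (1 + c) + Lam * c, hA0, by positivity, fun δ hδ => ?_⟩
  obtain ⟨L, S, hS⟩ := exists_isLipschitzMinorant hr₂0 hr₂ hδ hu₂ (fun x hx => (hA x hx).1)
    fun x hx => (hgrowth₂ x hx).1
  obtain ⟨L', T, hT⟩ := exists_isLipschitzMinorant hr₂0 hr₂ hδ hu₂.neg (fun x hx => (hA x hx).2)
    fun x hx => (hgrowth₂ x hx).dual.1
  exact exists_lipschitzWith_jetSolution_near hF hF0 hK hA0 hδ hS hT hψ (ball_subset_ball hr₁.le)

end Penalization

/-! ### Superjets with an exceptional gradient -/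

section ExceptionalGradient

lemma eventually_exists_isLocalMax_add {X : Type*} [PseudoMetricSpace X] [ProperSpace X]
    {Φ g : X → ℝ} {s : Set X} {x₀ : X} {γ : ℝ} (hs : IsOpen s) (hx₀ : x₀ ∈ s)
    (hΦ : ContinuousOn Φ s) (hγ : 0 < γ) (hmax : ∀ᶠ y in 𝓝 x₀, Φ y + γ * dist y x₀ ^ 2 ≤ Φ x₀)
    (hg : Continuous g) (hg₀ : g x₀ = 0) (hgle : ∀ y, g y ≤ dist y x₀) :
    ∀ᶠ ε in 𝓝[>] (0 : ℝ), ∃ x ∈ s, dist x x₀ ≤ ε / γ ∧ IsLocalMax (fun y => Φ y + ε * g y) x := by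
  obtain ⟨r, hr, hball⟩ := nhds_basis_closedBall.mem_iff.1 (inter_mem hmax (hs.mem_nhds hx₀))
  filter_upwards [self_mem_nhdsWithin, nhdsWithin_le_nhds (gt_mem_nhds (mul_pos hr hγ))]
    with ε (hε : 0 < ε) hεr
  obtain ⟨x, hx, hmaxx⟩ := (isCompact_closedBall x₀ r).exists_isMaxOn
    ⟨x₀, mem_closedBall_self hr.le⟩
    ((hΦ.mono fun y hy => (hball hy).2).add (hg.const_mul ε).continuousOn)
  have hdist : dist x x₀ ≤ ε / γ := by
    have hx₀x : Φ x₀ ≤ Φ x + ε * g x := by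
      simpa [hg₀] using hmaxx (mem_closedBall_self hr.le)
    have hgx : ε * g x ≤ ε * dist x x₀ := by gcongr; exact hgle x
    have hxx₀ : Φ x + γ * dist x x₀ ^ 2 ≤ Φ x₀ := (hball hx).1
    rw [le_div_iff₀ hγ]
    rcases (dist_nonneg (x := x) (y := x₀)).eq_or_lt with h | h
    · rw [← h, zero_mul]
      exact hε.le
    · exact le_of_mul_le_mul_right (by linarith) h
  have hxball : x ∈ ball x₀ r := hdist.trans_lt ((div_lt_iff₀ hγ).2 hεr)
  exact ⟨x, (hball hx).2, hdist,
    (hmaxx.on_subset ball_subset_closedBall).isLocalMax (isOpen_ball.mem_nhds hxball)⟩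

lemma SymOp.exists_neg_eigenvector [FiniteDimensional ℝ E] [CompleteSpace E] {A : SymOp E}
    (hA : ¬ 0 ≤ A) : ∃ (e : E) (ν : ℝ), ‖e‖ = 1 ∧ ν < 0 ∧ A e = ν • e := by
  have hsymm : (A : E →L[ℝ] E).IsSymmetric := A.2.isSymmetric
  set b := hsymm.eigenvectorBasis rfl
  have hb (i) : A (b i) = hsymm.eigenvalues rfl i • b i := hsymm.apply_eigenvectorBasis rfl i
  contrapose! hA
  refine SymOp.nonneg_iff_inner_nonneg.2 fun v => ?_
  rw [← b.sum_inner_mul_inner]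
  refine Finset.sum_nonneg fun i _ => ?_
  have hi : 0 ≤ hsymm.eigenvalues rfl i := by
    by_contra! hneg
    exact hA _ _ (b.orthonormal.1 i) hneg (hb i)
  rw [A.inner_comm, hb, real_inner_smul_left, mul_assoc]
  exact mul_nonneg hi (mul_self_nonneg _)

variable {u : E → ℝ} {s : Set E} {x₀ p₀ e x : E} {ν γ ε : ℝ}

section

variable [CompleteSpace E] {A : SymOp E}

/-- The component of `p - p₀` along the eigenvector `e` does not vanish, because the two terms
contributing to it, from the Hessian and from the tilt, have the same sign. -/
lemma IsSuperjet.exists_ne_of_isLocalMax_add_abs_inner (he : ‖e‖ = 1) (hν : ν < 0)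
    (hAe : A e = ν • e) (hε : 0 < ε)
    (hmax : IsLocalMax (fun y => u y - quadPoly p₀ A (y - x₀) + ε * |⟪e, y - x₀⟫|) x) :
    ∃ p ≠ p₀, ‖p - p₀‖ ≤ ε + ‖(A : E →L[ℝ] E)‖ * ‖x - x₀‖ ∧ IsSuperjet u x p A := by
  obtain ⟨σ, hσ, hσe⟩ : ∃ σ : ℝ, |σ| = 1 ∧ σ * ⟪e, x - x₀⟫ = |⟪e, x - x₀⟫| := by
    rcases le_total 0 ⟪e, x - x₀⟫ with h | h
    · exact ⟨1, abs_one, by rw [abs_of_nonneg h, one_mul]⟩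
    · exact ⟨-1, by simp, by rw [abs_of_nonpos h, neg_one_mul]⟩
  have htilt : IsLocalMax (fun y => u y - quadPoly (p₀ - (ε * σ) • e) A (y - x₀)) x := by
    filter_upwards [hmax] with y hy
    have hle : ε * (σ * ⟪e, y - x₀⟫) ≤ ε * |⟪e, y - x₀⟫| := by
      gcongr
      exact (le_abs_self _).trans_eq (by rw [abs_mul, hσ, one_mul])
    rw [← hσe] at hy
    simp only [quadPoly, inner_sub_left, real_inner_smul_left] at hy ⊢
    linarith
  refine ⟨_, fun hp => ?_, ?_, IsSuperjet.of_isLocalMax htilt⟩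
  · have hcomp : ν * ⟪e, x - x₀⟫ - ε * σ = 0 := by
      rw [sub_add, sub_eq_self, sub_eq_zero] at hp
      have h := congrArg (⟪·, e⟫) hp
      simp only [A.inner_comm, hAe, real_inner_smul_left, real_inner_self_eq_norm_sq, he] at h
      linarith
    have hσ2 : σ * σ = 1 := by rw [← abs_mul_abs_self, hσ, one_mul]
    have hsum : ν * |⟪e, x - x₀⟫| = ε := by
      rw [← hσe]
      linear_combination σ * hcomp + ε * hσ2
    exact (mul_nonpos_of_nonpos_of_nonneg hν.le (abs_nonneg _)).not_gt (hsum ▸ hε)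
  · rw [sub_add_eq_add_sub, add_sub_assoc, add_sub_cancel_left, sub_eq_neg_add]
    refine (norm_add_le _ _).trans (add_le_add ?_ ((A : E →L[ℝ] E).le_opNorm _))
    rw [norm_neg, norm_smul, he, mul_one, norm_mul, Real.norm_eq_abs σ, hσ, mul_one,
      Real.norm_of_nonneg hε.le]

end

lemma IsSuperjet.frequently_of_neg_eigenvector [ProperSpace E] {A : SymOp E} (hs : IsOpen s)
    (hu : ContinuousOn u s) (hx₀ : x₀ ∈ s) (he : ‖e‖ = 1) (hν : ν < 0) (hAe : A e = ν • e)
    (hγ : 0 < γ)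
    (hle : ∀ᶠ y in 𝓝 x₀, u y + γ * ‖y - x₀‖ ^ 2 ≤ u x₀ + quadPoly p₀ A (y - x₀)) :
    ∃ᶠ p in 𝓝[≠] p₀, ∃ x ∈ s, IsSuperjet u x p A := by
  have hquad := continuous_quadPoly p₀ A
  have hcontact := eventually_exists_isLocalMax_add (Φ := fun y => u y - quadPoly p₀ A (y - x₀))
    (g := fun y => |⟪e, y - x₀⟫|) hs hx₀ (hu.sub (by fun_prop)) hγ
    (hle.mono fun y hy => by
      rw [sub_self, quadPoly_zero, dist_eq_norm]
      linarith)
    (by fun_prop) (by simp)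
    (fun y => by simpa [he, dist_eq_norm] using abs_real_inner_le_norm e (y - x₀))
  refine nhdsWithin_basis_ball.frequently_iff.2 fun r hr => ?_
  have hlim : Tendsto (fun ε => ε + ‖(A : E →L[ℝ] E)‖ * (ε / γ)) (𝓝[>] 0) (𝓝 0) :=
    tendsto_nhdsWithin_of_tendsto_nhds <| Continuous.tendsto' (by fun_prop) _ _ (by simp)
  obtain ⟨ε, ⟨x, hxs, hx, hmax⟩, hεr, hε⟩ :=
    (hcontact.and ((hlim.eventually_lt_const hr).and self_mem_nhdsWithin)).exists
  rw [dist_eq_norm] at hx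
  obtain ⟨p, hp, hnorm, hjet⟩ :=
    IsSuperjet.exists_ne_of_isLocalMax_add_abs_inner he hν hAe hε hmax
  refine ⟨p, ⟨?_, hp⟩, x, hxs, hjet⟩
  rw [mem_ball_iff_norm]
  refine hnorm.trans_lt (lt_of_le_of_lt ?_ hεr)
  gcongr

lemma jetSubsolutionAt_of_ne [ProperSpace E] {Lam : ℝ≥0} {F : SymOp E → ℝ} {q : E → ℝ}
    (hF : IsElliptic Lam F) (hs : IsOpen s) (hu : ContinuousOn u s) (hq : ContinuousAt q p₀)
    (hq₀ : q p₀ ≤ F 0) (h : ∀ x ∈ s, ∀ p A, p ≠ p₀ → IsSuperjet u x p A → q p ≤ F A)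
    (hx₀ : x₀ ∈ s) : JetSubsolutionAt F (fun _ _ => q) u x₀ := by
  intro p A hp
  rcases ne_or_eq p p₀ with hne | rfl
  · exact h x₀ hx₀ p A hne hp
  by_cases hA : 0 ≤ A
  · exact hq₀.trans (hF.monotone hA)
  have := FiniteDimensional.of_locallyCompactSpace ℝ (E := E)
  obtain ⟨e, ν, he, hν, hAe⟩ := SymOp.exists_neg_eigenvector hA
  refine ge_of_tendsto (tendsto_nhdsWithin_of_tendsto_nhds (s := Ioi 0)
    (hF.tendsto_add_smul_one A)) ?_
  filter_upwards [self_mem_nhdsWithin, nhdsWithin_le_nhds (gt_mem_nhds (neg_pos.2 hν))]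
    with c (hc : 0 < c) hcν
  have hfreq : ∃ᶠ p' in 𝓝[≠] p, ∃ x ∈ s, IsSuperjet u x p' (A + c • 1) :=
    IsSuperjet.frequently_of_neg_eigenvector hs hu hx₀ he (ν := ν + c) (by linarith)
      (by simp [hAe, add_smul]) (half_pos hc) <| by
        filter_upwards [hp] with y hy
        rw [quadPoly_add_smul_one]
        linarith
  refine le_of_tendsto_of_frequently (hq.tendsto.mono_left nhdsWithin_le_nhds) <|
    (hfreq.and_eventually self_mem_nhdsWithin).mono ?_
  rintro p' ⟨⟨x, hx, hjet⟩, hne⟩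
  exact h x hx p' _ hne hjet

end ExceptionalGradient

section SingularEquation

lemma neg_mul_one_add_le_of_neg_le_rpow_mul {t θ K a : ℝ} (ht : 0 < t) (hθ : θ ∈ Icc (-1) 0)
    (hK : 0 ≤ K) (h : -K ≤ t ^ θ * a) : -(K * (1 + t)) ≤ a := by
  have hpow : t ^ (-θ) ≤ 1 + t := by
    rcases le_total t 1 with ht1 | ht1
    · linarith [Real.rpow_le_one ht.le ht1 (neg_nonneg.2 hθ.2)]
    · have := Real.rpow_le_rpow_of_exponent_le ht1 (neg_le.2 hθ.1)
      rw [Real.rpow_one] at this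
      linarith
  calc -(K * (1 + t)) ≤ -(K * t ^ (-θ)) := by gcongr
    _ = t ^ (-θ) * -K := by ring
    _ ≤ t ^ (-θ) * (t ^ θ * a) := by gcongr
    _ = a := by rw [← mul_assoc, ← Real.rpow_add ht, neg_add_cancel, Real.rpow_zero, one_mul]

variable [ProperSpace E] {Lam : ℝ≥0} {F : SymOp E → ℝ} {u θ : E → ℝ} {s : Set E} {q : E} {K : ℝ}

lemma jetSubsolutionAt_of_neg_le_rpow_mul (hF : IsElliptic Lam F) (hF0 : 0 ≤ F 0)
    (hs : IsOpen s) (hu : ContinuousOn u s) (hK : 0 ≤ K) (hθ : ∀ x ∈ s, θ x ∈ Icc (-1) 0)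
    (h : ∀ x ∈ s, ∀ p A, q + p ≠ 0 → IsSuperjet u x p A → -K ≤ ‖q + p‖ ^ θ x * F A)
    {x : E} (hx : x ∈ s) :
    JetSubsolutionAt F (fun _ _ p => -(K * (1 + ‖q‖) * (1 + ‖p‖))) u x := by
  have hgrowth : JetSubsolutionAt F (fun _ _ p => -(K * (1 + ‖q + p‖))) u x := by
    refine jetSubsolutionAt_of_ne (p₀ := -q) hF hs hu (by fun_prop) (by simp; linarith)
      (fun x hx p A hp hjet => ?_) hx
    have hqp : q + p ≠ 0 := fun h0 => hp (eq_neg_of_add_eq_zero_right h0)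
    exact neg_mul_one_add_le_of_neg_le_rpow_mul (norm_pos_iff.2 hqp) (hθ x hx) hK
      (h x hx p A hqp hjet)
  refine fun p A hp => le_trans (neg_le_neg ?_) (hgrowth p A hp)
  rw [mul_assoc]
  gcongr
  linarith [norm_add_le q p, mul_nonneg (norm_nonneg q) (norm_nonneg p)]

lemma hasLinearGrowthAt_of_abs_rpow_mul_le (hF : IsElliptic Lam F) (hF0 : F 0 = 0)
    (hs : IsOpen s) (hu : ContinuousOn u s) (hK : 0 ≤ K) (hθ : ∀ x ∈ s, θ x ∈ Icc (-1) 0)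
    (hsub : ∀ x ∈ s, ∀ p A, q + p ≠ 0 → IsSuperjet u x p A → -K ≤ ‖q + p‖ ^ θ x * F A)
    (hsuper : ∀ x ∈ s, ∀ p A, q + p ≠ 0 → IsSubjet u x p A → ‖q + p‖ ^ θ x * F A ≤ K)
    {x : E} (hx : x ∈ s) : HasLinearGrowthAt F (K * (1 + ‖q‖)) u x := by
  refine ⟨jetSubsolutionAt_of_neg_le_rpow_mul hF hF0.ge hs hu hK hθ hsub hx,
    jetSupersolutionAt_iff_dual.2 ?_⟩
  have hdual : ∀ x ∈ s, ∀ p A, -q + p ≠ 0 → IsSuperjet (-u) x p A →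
      -K ≤ ‖-q + p‖ ^ θ x * dualOp F A := by
    intro x hx p A hqp hp
    have hneg : -q + p = -(q + -p) := by abel
    rw [hneg, neg_ne_zero] at hqp
    rw [hneg, norm_neg, dualOp, mul_neg]
    refine neg_le_neg (hsuper x hx (-p) (-A) hqp (isSubjet_iff_neg.2 ?_))
    rwa [neg_neg, neg_neg]
  simpa only [norm_neg] using
    jetSubsolutionAt_of_neg_le_rpow_mul hF.dual (by simp [dualOp, hF0]) hs hu.neg hK hθ hdual hx

end SingularEquation

/-! ### Test functions and matrices -/

section TestFunctions

variable [CompleteSpace E] {Lam : ℝ≥0} {F : SymOp E → ℝ} {Q : E → ℝ → E → ℝ} {u φ : E → ℝ}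
  {x : E} {A : SymOp E}

lemma gradient_neg (φ : E → ℝ) : gradient (-φ) = -gradient φ := by
  ext y
  simp [gradient, fderiv_neg]

lemma fderiv_fderiv_apply_of_hasFDerivAt_gradient {T : E →L[ℝ] E}
    (hT : HasFDerivAt (gradient φ) T x) (v w : E) : fderiv ℝ (fderiv ℝ φ) x v w = ⟪T v, w⟫ := by
  have hfderiv : HasFDerivAt (fderiv ℝ φ) (innerSL ℝ ∘L T) x := by
    rw [← toDual_comp_gradient]
    exact (innerSL ℝ).hasFDerivAt.comp x hT
  rw [hfderiv.fderiv]
  rfl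

lemma exists_symOp_hasFDerivAt_gradient (hφ : ContDiffAt ℝ 2 φ x) :
    ∃ A : SymOp E, HasFDerivAt (gradient φ) (A : E →L[ℝ] E) x := by
  let D : StrongDual ℝ E →L[ℝ] E :=
    (InnerProductSpace.toDual ℝ E).symm.toLinearIsometry.toContinuousLinearMap
  have hD : HasFDerivAt (gradient φ) (D ∘L fderiv ℝ (fderiv ℝ φ) x) x :=
    D.hasFDerivAt.comp x
      ((hφ.fderiv_right (m := 1) (by norm_num)).differentiableAt one_ne_zero).hasFDerivAt
  refine ⟨⟨D ∘L fderiv ℝ (fderiv ℝ φ) x, ?_⟩, hD⟩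
  refine ContinuousLinearMap.isSelfAdjoint_iff_isSymmetric.2 fun v w => ?_
  have hsymm : IsSymmSndFDerivAt ℝ φ x := hφ.isSymmSndFDerivAt (by simp)
  calc ⟪(D ∘L fderiv ℝ (fderiv ℝ φ) x) v, w⟫
      = fderiv ℝ (fderiv ℝ φ) x v w := (fderiv_fderiv_apply_of_hasFDerivAt_gradient hD v w).symm
    _ = fderiv ℝ (fderiv ℝ φ) x w v := hsymm v w
    _ = ⟪v, (D ∘L fderiv ℝ (fderiv ℝ φ) x) w⟫ := by
      rw [fderiv_fderiv_apply_of_hasFDerivAt_gradient hD, real_inner_comm]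

/-- Enlarging the Hessian by `γ` absorbs the error term in Taylor's formula. -/
lemma isSuperjet_gradient_add_smul_one (hφ : ∀ᶠ y in 𝓝 x, DifferentiableAt ℝ φ y)
    (hA : HasFDerivAt (gradient φ) (A : E →L[ℝ] E) x) {γ : ℝ} (hγ : 0 < γ) :
    IsSuperjet φ x (gradient φ x) (A + γ • 1) := by
  obtain ⟨ρ, hρ, hball⟩ := Metric.eventually_nhds_iff_ball.1
    (hφ.and ((hasFDerivAt_iff_isLittleO.1 hA).def (half_pos hγ)))
  filter_upwards [ball_mem_nhds x hρ] with y hy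
  have hsub : closedBall x ‖y - x‖ ⊆ ball x ρ :=
    closedBall_subset_ball (by rwa [← dist_eq_norm])
  have hmean := Convex.norm_image_sub_le_of_norm_hasFDerivWithin_le (C := γ / 2 * ‖y - x‖)
    (fun z hz => ((hball z (hsub hz)).1.hasGradientAt.hasFDerivAt.sub
      (hasGradientAt_quadPoly_sub (gradient φ x) A x z).hasFDerivAt).hasFDerivWithinAt)
    (fun z hz => by
      rw [← map_sub, LinearIsometryEquiv.norm_map, ← sub_sub]
      refine (hball z (hsub hz)).2.trans ?_
      gcongr
      exact mem_closedBall_iff_norm.1 hz)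
    (convex_closedBall x ‖y - x‖) (mem_closedBall_self (norm_nonneg _))
    (mem_closedBall_iff_norm.2 le_rfl)
  have hle := (le_abs_self _).trans hmean
  simp only [Pi.sub_apply, sub_self, quadPoly_zero] at hle
  rw [quadPoly_add_smul_one]
  linarith

lemma JetSubsolutionAt.le_of_isLocalMax (hF : IsElliptic Lam F) (h : JetSubsolutionAt F Q u x)
    (hφ : ∀ᶠ y in 𝓝 x, DifferentiableAt ℝ φ y)
    (hA : HasFDerivAt (gradient φ) (A : E →L[ℝ] E) x) (hmax : IsLocalMax (fun y => u y - φ y) x) :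
    Q x (u x) (gradient φ x) ≤ F A := by
  refine ge_of_tendsto (tendsto_nhdsWithin_of_tendsto_nhds (s := Ioi 0)
    (hF.tendsto_add_smul_one A)) ?_
  filter_upwards [self_mem_nhdsWithin] with γ hγ
  refine h _ _ ?_
  filter_upwards [hmax, isSuperjet_gradient_add_smul_one hφ hA hγ] with y hy hjet
  linarith

lemma JetSupersolutionAt.le_of_isLocalMin (hF : IsElliptic Lam F) (h : JetSupersolutionAt F Q u x)
    (hφ : ∀ᶠ y in 𝓝 x, DifferentiableAt ℝ φ y)
    (hA : HasFDerivAt (gradient φ) (A : E →L[ℝ] E) x) (hmin : IsLocalMin (fun y => u y - φ y) x) :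
    F A ≤ Q x (u x) (gradient φ x) := by
  have hle := (jetSupersolutionAt_iff_dual.1 h).le_of_isLocalMax (φ := -φ) (A := -A) hF.dual
    (hφ.mono fun y hy => hy.neg) (by rw [gradient_neg]; exact hA.neg) (by
      filter_upwards [hmin] with y hy
      simp only [Pi.neg_apply]
      linarith)
  simpa [gradient_neg, dualOp] using hle

end TestFunctions

section Matrices

variable {d : ℕ} {Lam : ℝ≥0} {F : Mat d → ℝ} {φ : Euc d → ℝ} {x : Euc d}

/-- The symmetric matrix of a self-adjoint operator of `ℝᵈ`. -/
def SymOp.toMat (A : SymOp (Euc d)) : Mat d :=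
  (Matrix.toEuclideanCLM (𝕜 := ℝ)).symm (A : Euc d →L[ℝ] Euc d)

lemma SymOp.toMat_isHermitian (A : SymOp (Euc d)) : A.toMat.IsHermitian :=
  ((map_star (Matrix.toEuclideanCLM (n := Fin d) (𝕜 := ℝ)).symm _).symm.trans
    (congrArg _ A.2.star_eq))

lemma SymOp.toMat_add (A B : SymOp (Euc d)) : (A + B).toMat = A.toMat + B.toMat :=
  map_add (Matrix.toEuclideanCLM (𝕜 := ℝ)).symm _ _

lemma SymOp.toMat_posSemidef {A : SymOp (Euc d)} (hA : 0 ≤ A) : A.toMat.PosSemidef := by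
  rw [← Matrix.isPositive_toEuclideanLin_iff, ← Matrix.coe_toEuclideanCLM_eq_toEuclideanLin,
    SymOp.toMat, StarAlgEquiv.apply_symm_apply, ContinuousLinearMap.isPositive_toLinearMap_iff,
    ← ContinuousLinearMap.nonneg_iff_isPositive]
  exact hA

lemma matOpNorm_toMat (A : SymOp (Euc d)) : matOpNorm A.toMat = ‖(A : Euc d →L[ℝ] Euc d)‖ := by
  rw [matOpNorm, SymOp.toMat, StarAlgEquiv.apply_symm_apply]

lemma isElliptic_comp_toMat {lam Lam : ℝ} (hlam : 0 ≤ lam) (hF : UniformlyElliptic lam Lam F) :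
    IsElliptic Lam.toNNReal fun A => F A.toMat where
  monotone A B hAB := by
    have hpos := SymOp.toMat_posSemidef (SymOp.sub_nonneg_iff.2 hAB)
    have h := (hF.2 _ _ A.toMat_isHermitian hpos).1
    rw [← SymOp.toMat_add, add_sub_cancel] at h
    exact sub_nonneg.1 ((mul_nonneg hlam (norm_nonneg _)).trans h)
  add_smul_one_le A c hc := by
    have hpos : (0 : SymOp (Euc d)) ≤ c • 1 := SymOp.nonneg_iff_inner_nonneg.2 fun v => by
      simp [inner_smul_left, mul_nonneg hc]
    have h := (hF.2 _ _ A.toMat_isHermitian (SymOp.toMat_posSemidef hpos)).2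
    rw [← SymOp.toMat_add, matOpNorm_toMat] at h
    have hnorm : ‖((c • 1 : SymOp (Euc d)) : Euc d →L[ℝ] Euc d)‖ ≤ c :=
      ContinuousLinearMap.opNorm_le_bound _ hc fun v => by simp [norm_smul, abs_of_nonneg hc]
    refine (sub_le_iff_le_add'.1 h).trans (add_le_add_right ?_ _)
    exact mul_le_mul (Real.le_coe_toNNReal Lam) hnorm (norm_nonneg _) (by positivity)

lemma SymOp.toMat_apply (A : SymOp (Euc d)) (i j : Fin d) :
    A.toMat i j = ⟪A (EuclideanSpace.single i 1), EuclideanSpace.single j 1⟫ := by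
  have h := Matrix.inner_toEuclideanCLM A.toMat (EuclideanSpace.single i 1)
    (EuclideanSpace.single j 1)
  rw [SymOp.toMat, StarAlgEquiv.apply_symm_apply, ← SymOp.toMat, real_inner_comm,
    A.inner_comm] at h
  simpa using h.symm

lemma hessM_eq_toMat {A : SymOp (Euc d)}
    (hA : HasFDerivAt (gradient φ) (A : Euc d →L[ℝ] Euc d) x) : hessM φ x = A.toMat := by
  ext i j
  rw [hessM, Matrix.of_apply, iteratedFDeriv_two_apply, SymOp.toMat_apply]
  exact fderiv_fderiv_apply_of_hasFDerivAt_gradient hA _ _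

lemma viscSolPure_of_jetSolutionAt {g w : Euc d → ℝ} {s : Set (Euc d)}
    (hF : IsElliptic Lam fun A => F A.toMat)
    (h : ∀ x ∈ s, JetSolutionAt (fun A => F A.toMat) (fun y _ _ => g y) w x) :
    ViscSolPure F g w s := by
  refine ⟨fun x hx φ hφ hmax => ?_, fun x hx φ hφ hmin => ?_⟩ <;>
    obtain ⟨A, hA⟩ := exists_symOp_hasFDerivAt_gradient hφ <;>
    have hdiff : ∀ᶠ y in 𝓝 x, DifferentiableAt ℝ φ y :=
      (hφ.eventually (by simp)).mono fun y hy => hy.differentiableAt two_ne_zero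
  · rw [hessM_eq_toMat hA]
    exact (h x hx).1.le_of_isLocalMax hF hdiff hA hmax
  · rw [hessM_eq_toMat hA]
    exact (h x hx).2.le_of_isLocalMin hF hdiff hA hmin

/-- The interior `C^{1,β}` estimate with constant `C` for viscosity solutions of `F(D²w) = g` on the
unit ball of `ℝᵈ`. -/
def ViscInteriorEstimate (F : Mat d → ℝ) (β C : ℝ) : Prop :=
  ∀ g : Euc d → ℝ, ContinuousOn g (ball 0 1) → (∃ K, ∀ x ∈ ball (0 : Euc d) 1, |g x| ≤ K) →
  ∀ w : Euc d → ℝ, ContinuousOn w (ball 0 1) → ViscSolPure F g w (ball 0 1) →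
    ∃ Dw : Euc d → Euc d, (∀ y ∈ ball (0 : Euc d) (1 / 2), HasGradientAt w (Dw y) y) ∧
      ∀ Kw Kg : ℝ, (∀ x ∈ ball (0 : Euc d) 1, |w x| ≤ Kw) →
        (∀ x ∈ ball (0 : Euc d) 1, |g x| ≤ Kg) →
        (∀ x ∈ ball (0 : Euc d) (1 / 2), |w x| + ‖Dw x‖ ≤ C * (Kw + Kg)) ∧
        ∀ x ∈ ball (0 : Euc d) (1 / 2), ∀ y ∈ ball (0 : Euc d) (1 / 2),
          ‖Dw x - Dw y‖ ≤ C * (Kw + Kg) * ‖x - y‖ ^ β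

lemma ViscInteriorEstimate.interiorEstimate {β C : ℝ} (h : ViscInteriorEstimate F β C)
    (hF : IsElliptic Lam fun A => F A.toMat) : InteriorEstimate (fun A => F A.toMat) β C := by
  intro g w Kg Kw hg hw hgK hwK hsol
  obtain ⟨Dw, hDw, hest⟩ :=
    h g hg ⟨Kg, hgK⟩ w hw (viscSolPure_of_jetSolutionAt hF hsol)
  obtain ⟨hbound, hholder⟩ := hest Kw Kg hwK hgK
  exact .of_hasGradientAt hDw
    (fun x hx => (le_add_of_nonneg_left (abs_nonneg _)).trans (hbound x hx)) hholder

section QuadraticTest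

variable (p : Euc d) (A : SymOp (Euc d)) (x : Euc d)

lemma contDiffAt_quadPoly_sub : ContDiffAt ℝ 2 (fun y => quadPoly p A (y - x)) x :=
  ((contDiff_quadPoly p A).comp (contDiff_id.sub contDiff_const)).contDiffAt

lemma gradient_quadPoly_sub : gradient (fun y => quadPoly p A (y - x)) x = p := by
  simpa using (hasGradientAt_quadPoly_sub p A x x).gradient

lemma hessM_quadPoly_sub : hessM (fun y => quadPoly p A (y - x)) x = A.toMat := by
  refine hessM_eq_toMat ?_
  have hgrad : gradient (fun y => quadPoly p A (y - x)) = fun y => p + A (y - x) :=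
    funext fun y => (hasGradientAt_quadPoly_sub p A x y).gradient
  rw [hgrad]
  simpa [Function.comp_def] using ((A : Euc d →L[ℝ] Euc d).hasFDerivAt.comp x
    ((hasFDerivAt_id x).sub_const x)).const_add p

end QuadraticTest

lemma ViscSol.hasLinearGrowthAt {θ f u : Euc d → ℝ} {q : Euc d} {K : ℝ}
    (h : ViscSol F θ f q u) (hF : IsElliptic Lam fun A => F A.toMat) (hF0 : F 0 = 0)
    (hθ : ∀ x ∈ ball (0 : Euc d) 1, θ x ∈ Icc (-1) 0)
    (hf : ∀ x ∈ ball (0 : Euc d) 1, |f x| ≤ K) (hu : ContinuousOn u (ball 0 1))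
    (hx : x ∈ ball (0 : Euc d) 1) :
    HasLinearGrowthAt (fun A => F A.toMat) (K * (1 + ‖q‖)) u x := by
  have hK : 0 ≤ K := (abs_nonneg _).trans (hf x hx)
  refine hasLinearGrowthAt_of_abs_rpow_mul_le hF (by simpa [SymOp.toMat] using hF0) isOpen_ball hu
    hK hθ (fun y hy p A hqp hp => ?_) (fun y hy p A hqp hp => ?_) hx
  · have hle := h.1 y hy _ (contDiffAt_quadPoly_sub p A y)
      (isSuperjet_iff_isLocalMax_sub.1 hp)
    rw [gradient_quadPoly_sub, hessM_quadPoly_sub] at hle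
    exact (neg_le_of_abs_le (hf y hy)).trans (hle hqp)
  · have hle := h.2 y hy _ (contDiffAt_quadPoly_sub p A y)
      (isSubjet_iff_isLocalMin_sub.1 hp)
    rw [gradient_quadPoly_sub, hessM_quadPoly_sub] at hle
    exact (hle hqp).trans (le_of_abs_le (hf y hy))

end Matrices

/-! ### Local regularity -/

lemma InteriorEstimate.exists_hasC1HolderBound_ball [ProperSpace E] {Lam : ℝ≥0}
    {F : SymOp E → ℝ} {β C K r R : ℝ} {u : E → ℝ} {x₀ : E} (hF : IsElliptic Lam F)
    (hF0 : F 0 = 0) (hreg : InteriorEstimate F β C) (hβ : 0 < β) (hC : 0 ≤ C) (hK : 0 ≤ K)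
    (hr : 0 < r) (hrR : r < R) (hu : ContinuousOn u (ball x₀ R))
    (hgrowth : ∀ x ∈ ball x₀ R, HasLinearGrowthAt F K u x) :
    ∃ M N, 0 ≤ N ∧ HasC1HolderBound u (ball x₀ r) β M N := by
  obtain ⟨A, k, hA, hk, happrox⟩ :=
    HasLinearGrowthAt.exists_approx hF hF0 hK hr hrR hu hgrowth
  obtain ⟨M, N, hN, hbound⟩ := hreg.exists_hasC1HolderBound_univ hF hβ hC hA hk
  choose w h L hLip hwA hh hhk hsol hwu using
    fun n : ℕ => happrox (1 / (n + 1)) Nat.one_div_pos_of_nat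
  refine ⟨M, N, hN, .of_tendsto (l := atTop) (W := w) isOpen_ball (convex_ball x₀ r) hβ hN
    (fun n => ?_) fun x hx => ?_⟩
  · exact (hbound (w n) (h n) (L n) (hLip n) (hwA n) (hh n) (hhk n) (hsol n)).mono
      (subset_univ _)
  · exact tendsto_iff_norm_sub_tendsto_zero.2 <| squeeze_zero (fun _ => norm_nonneg _)
      (fun n => hwu n x hx) tendsto_one_div_add_atTop_nhds_zero_nat

lemma le_of_le_sInf_image_ball {X : Type*} [PseudoMetricSpace X] [ProperSpace X] {θ : X → ℝ}
    {x₀ x : X} {r a : ℝ} (hθ : ContinuousOn θ (closedBall x₀ r)) (ha : a ≤ sInf (θ '' ball x₀ r))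
    (hx : x ∈ ball x₀ r) : a ≤ θ x := by
  have hbdd : BddBelow (θ '' ball x₀ r) :=
    ((isCompact_closedBall _ _).image_of_continuousOn hθ).bddBelow.mono
      (image_mono ball_subset_closedBall)
  exact ha.trans (csInf_le hbdd (mem_image_of_mem θ hx))

theorem statement4_general {d : ℕ} {lam Lam : ℝ} (hlam : 0 ≤ lam) {F : Mat d → ℝ}
    (hF : UniformlyElliptic lam Lam F) {β C : ℝ} (hβ : 0 < β) (hC : 0 ≤ C)
    (hreg : ViscInteriorEstimate F β C) {θ f u : Euc d → ℝ} {q : Euc d}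
    (hθ : ∀ x ∈ ball (0 : Euc d) 1, θ x ∈ Icc (-1) 0)
    (hf : ∃ K, ∀ x ∈ ball (0 : Euc d) 1, |f x| ≤ K)
    (hu : ContinuousOn u (ball 0 1)) (husol : ViscSol F θ f q u) :
    ∃ Du : Euc d → Euc d,
      (∀ y ∈ ball (0 : Euc d) 1, HasGradientAt u (Du y) y) ∧
      ∀ K : Set (Euc d), IsCompact K → K ⊆ ball 0 1 →
        ∃ C > 0, ∀ x ∈ K, ∀ y ∈ K, ‖Du x - Du y‖ ≤ C * ‖x - y‖ ^ β := by
  obtain ⟨k, hk⟩ := hf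
  have hk0 : 0 ≤ k := (abs_nonneg _).trans (hk 0 (mem_ball_self one_pos))
  have hell := isElliptic_comp_toMat hlam hF
  have hbound : ∀ r, 0 < r → r < 1 → ∃ M N, 0 ≤ N ∧ HasC1HolderBound u (ball 0 r) β M N :=
    fun r hr hr1 => (hreg.interiorEstimate hell).exists_hasC1HolderBound_ball hell
      (by simpa [SymOp.toMat] using hF.1) hβ hC (by positivity) hr hr1 hu
      fun x hx => husol.hasLinearGrowthAt hell hF.1 hθ hk hu hx
  refine ⟨gradient u, fun y hy => ?_, fun S hS hSb => ?_⟩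
  · obtain ⟨r, hyr, hr1⟩ := exists_between (mem_ball_zero_iff.1 hy)
    obtain ⟨M, N, -, h⟩ := hbound r ((norm_nonneg y).trans_lt hyr) hr1
    exact h.hasGradientAt (mem_ball_zero_iff.2 hyr)
  · obtain ⟨r, ⟨hr, hr1⟩, hSr⟩ := exists_pos_lt_subset_ball one_pos hS.isClosed hSb
    obtain ⟨M, N, hN, h⟩ := hbound r hr hr1
    refine ⟨N + 1, by positivity, fun x hx y hy => ?_⟩
    refine (h.norm_gradient_sub_le x (hSr hx) y (hSr hy)).trans ?_
    gcongr
    exact le_add_of_nonneg_right zero_le_one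

/-- the purely singular case (Corollary 7.1). -/
theorem statement4
    (d : ℕ) (hd : 1 ≤ d) (lam Lam : ℝ) (hlam : 0 < lam) (hlL : lam ≤ Lam)
    (F : Mat d → ℝ) (hF : UniformlyElliptic lam Lam F)
    (α : ℝ) (hα : α ∈ Set.Ioo (0:ℝ) 1)
    (hreg : ∀ β ∈ Set.Ioo (0:ℝ) α, ∃ Cβ > (0:ℝ),
      ∀ (g : Euc d → ℝ), ContinuousOn g (ball 0 1) →
        (∃ K, ∀ x ∈ ball (0 : Euc d) 1, |g x| ≤ K) →
      ∀ w : Euc d → ℝ, ContinuousOn w (ball 0 1) →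
        ViscSolPure F g w (ball 0 1) →
      ∃ Dw : Euc d → Euc d,
        (∀ y ∈ ball (0 : Euc d) (1/2), HasGradientAt w (Dw y) y) ∧
        ∀ Kw Kg : ℝ, (∀ x ∈ ball (0 : Euc d) 1, |w x| ≤ Kw) →
          (∀ x ∈ ball (0 : Euc d) 1, |g x| ≤ Kg) →
          (∀ x ∈ ball (0 : Euc d) (1/2), |w x| + ‖Dw x‖ ≤ Cβ * (Kw + Kg)) ∧
          ∀ x ∈ ball (0 : Euc d) (1/2), ∀ y ∈ ball (0 : Euc d) (1/2),
            ‖Dw x - Dw y‖ ≤ Cβ * (Kw + Kg) * ‖x - y‖ ^ β)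
    (θ : Euc d → ℝ) (hθ : ContinuousOn θ (closedBall 0 1))
    (hθinf : -1 < sInf (θ '' ball (0 : Euc d) 1))
    (hθneg : ∀ x ∈ ball (0 : Euc d) 1, θ x ≤ 0)
    (f : Euc d → ℝ) (hf : ContinuousOn f (ball 0 1))
    (hfb : ∃ K, ∀ x ∈ ball (0 : Euc d) 1, |f x| ≤ K)
    (u : Euc d → ℝ) (hu : ContinuousOn u (ball 0 1))
    (husol : ViscSol F θ f 0 u) :
    ∀ β : ℝ, 0 < β → β < α →
      ∃ Du : Euc d → Euc d,
        (∀ y ∈ ball (0 : Euc d) 1, HasGradientAt u (Du y) y) ∧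
        ∀ K : Set (Euc d), IsCompact K → K ⊆ ball 0 1 →
          ∃ C > 0, ∀ x ∈ K, ∀ y ∈ K, ‖Du x - Du y‖ ≤ C * ‖x - y‖ ^ β := by
  intro β hβ hβα
  obtain ⟨C, hC, hestimate⟩ := hreg β ⟨hβ, hβα⟩
  exact statement4_general hlam.le hF hβ hC.le hestimate (fun x hx =>
    ⟨le_of_le_sInf_image_ball hθ hθinf.le hx, hθneg x hx⟩) hfb hu husol

end
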